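/- arXiv:2307.04069 — 9 statements merged into one kernel-verified Lean document; each statement's English description precedes it below -/
import Mathlib

section
/- For any A ∈ ℝ^{m×n} and b ∈ ℝᵐ, the set S_λ(A,b) is path-connected: for any X₁, X₂ ∈ S_λ(A,b) there exists a continuous map X : [0,1] → S^{n×n} with X(0) = X₁, X(1) = X₂, and X(t) ∈ S_λ(A,b) for all t ∈ [0,1]. In particular, S_λ(A,b) is a connected subset of S^{n×n}. -/
open Matrix

/-- The vector of eigenvalues of a real symmetric matrix, in descending order
(junk value `0` if the matrix is not symmetric). -/
noncomputable def eigs {n : ℕ} (X : Matrix (Fin n) (Fin n) ℝ) : Fin n → ℝ :=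
  if hX : X.IsHermitian then
    fun i => (hX.eigenvalues ∘ Tuple.sort hX.eigenvalues) i.rev
  else fun _ => 0

/-- The eigenvalue constraint set `S_λ(A,b) = {X ∈ S^{n×n} : A λ(X) ≤ b}`. -/
def SLambda {m n : ℕ} (A : Matrix (Fin m) (Fin n) ℝ) (b : Fin m → ℝ) :
    Set (Matrix (Fin n) (Fin n) ℝ) :=
  {X | X.IsHermitian ∧ ∀ i, A.mulVec (eigs X) i ≤ b i}

theorem eigs_of_herm {n : ℕ} {X : Matrix (Fin n) (Fin n) ℝ} (hX : X.IsHermitian) :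
    eigs X = fun i => (hX.eigenvalues ∘ Tuple.sort hX.eigenvalues) i.rev := by
  rw [eigs, dif_pos hX]

theorem eigs_antitone {n : ℕ} (X : Matrix (Fin n) (Fin n) ℝ) : Antitone (eigs X) := by
  by_cases hX : X.IsHermitian
  · rw [eigs_of_herm hX]
    intro i j hij
    exact Tuple.monotone_sort hX.eigenvalues (Fin.rev_le_rev.mpr hij)
  · simp only [eigs, hX, dite_false]
    exact antitone_const

theorem charpoly_eigs {n : ℕ} {X : Matrix (Fin n) (Fin n) ℝ} (hX : X.IsHermitian) :
    X.charpoly = (diagonal (eigs X)).charpoly := by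
  rw [hX.charpoly_eq, charpoly_diagonal, eigs_of_herm hX]
  exact (Equiv.prod_comp (Fin.revPerm.trans (Tuple.sort hX.eigenvalues))
    (fun i => (Polynomial.X - Polynomial.C (hX.eigenvalues i)))).symm

theorem eigs_congr {n : ℕ} {X Y : Matrix (Fin n) (Fin n) ℝ} (hX : X.IsHermitian)
    (hY : Y.IsHermitian) (h : X.charpoly = Y.charpoly) : eigs X = eigs Y := by
  rw [eigs_of_herm hX, eigs_of_herm hY, (hX.eigenvalues_eq_eigenvalues_iff hY).mpr h]

theorem diag_herm {n : ℕ} (d : Fin n → ℝ) : (diagonal d).IsHermitian :=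
  isHermitian_diagonal d

theorem roots_diag {n : ℕ} (d : Fin n → ℝ) :
    (diagonal d).charpoly.roots = Multiset.map d Finset.univ.val := by
  rw [charpoly_diagonal, Polynomial.roots_prod]
  · simp
  · simp [Finset.prod_ne_zero_iff, Polynomial.X_sub_C_ne_zero]

theorem eigs_diag {n : ℕ} {d : Fin n → ℝ} (hd : Antitone d) : eigs (diagonal d) = d := by
  have h := roots_diag (eigs (diagonal d))
  rw [← charpoly_eigs (diag_herm d), roots_diag, Fin.univ_val_map, Fin.univ_val_map,
    Multiset.coe_eq_coe] at h
  have := h.symm.eq_of_pairwise' (r := (· ≥ ·))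
    (List.sortedGE_iff_pairwise.mp (eigs_antitone (diagonal d)).sortedGE_ofFn)
    (List.sortedGE_iff_pairwise.mp hd.sortedGE_ofFn)
  exact List.ofFn_injective this

/-- Every symmetric matrix is orthogonally similar to the diagonal of its sorted eigenvalues. -/
theorem exists_conj {n : ℕ} {X : Matrix (Fin n) (Fin n) ℝ} (hX : X.IsHermitian) :
    ∃ Q ∈ unitaryGroup (Fin n) ℝ, X = Q * diagonal (eigs X) * star Q := by
  have hD := diag_herm (eigs X)
  have he := (hX.eigenvalues_eq_eigenvalues_iff hD).mpr (charpoly_eigs hX)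
  have h1 := hX.spectral_theorem
  have h2 := hD.spectral_theorem
  rw [Unitary.conjStarAlgAut_apply] at h1 h2
  rw [← he] at h2
  set U := hX.eigenvectorUnitary
  set V := hD.eigenvectorUnitary
  set D := diagonal (RCLike.ofReal (K := ℝ) ∘ hX.eigenvalues)
  have hV : star (V : Matrix (Fin n) (Fin n) ℝ) * V = 1 := (Unitary.mem_iff.mp V.2).1
  refine ⟨(U * star V : unitaryGroup (Fin n) ℝ), (U * star V).2, ?_⟩
  have h2' : diagonal (eigs X) = V * D * star (V : Matrix (Fin n) (Fin n) ℝ) := h2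
  rw [h2', h1]
  simp only [Submonoid.coe_mul, Unitary.coe_star, star_mul, star_star]
  calc _ = (U : Matrix (Fin n) (Fin n) ℝ) * 1 * D * 1 * star (U : Matrix (Fin n) (Fin n) ℝ) := by simp
    _ = _ := by rw [← hV]; simp only [mul_assoc]

theorem conj_herm {n : ℕ} (Q : Matrix (Fin n) (Fin n) ℝ) (d : Fin n → ℝ) :
    (Q * diagonal d * star Q).IsHermitian := by
  rw [star_eq_conjTranspose]
  exact isHermitian_mul_mul_conjTranspose _ (diag_herm d)

theorem eigs_conj {n : ℕ} {Q : Matrix (Fin n) (Fin n) ℝ} (hQ : Q ∈ unitaryGroup (Fin n) ℝ)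
    {d : Fin n → ℝ} (hd : Antitone d) : eigs (Q * diagonal d * star Q) = d := by
  rw [← eigs_diag hd]
  rw [eigs_diag hd]
  conv_rhs => rw [← eigs_diag hd]
  refine eigs_congr (conj_herm Q d) (diag_herm d) ?_
  rw [charpoly_mul_comm, ← mul_assoc, (Unitary.mem_iff.mp hQ).1, one_mul]

/-- Householder matrix. -/
noncomputable def hh {n : ℕ} (v : Fin n → ℝ) : Matrix (Fin n) (Fin n) ℝ :=
  1 - (2 / (v ⬝ᵥ v)) • vecMulVec v v

theorem hh_mem {n : ℕ} (v : Fin n → ℝ) : hh v ∈ unitaryGroup (Fin n) ℝ := by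
  have hs : star (hh v) = hh v := by
    rw [star_eq_conjTranspose]
    ext i j
    simp [hh, vecMulVec_apply, one_apply, eq_comm, mul_comm]
  rw [mem_unitaryGroup_iff, hs]
  by_cases hv : v ⬝ᵥ v = 0
  · simp [hh, hv]
  · have : vecMulVec v v * vecMulVec v v = (v ⬝ᵥ v) • vecMulVec v v := by
      rw [vecMulVec_mul_vecMulVec]
      ext i j; simp [vecMulVec_apply]; try ring
    simp only [hh, sub_mul, mul_sub, one_mul, mul_one, smul_mul_smul_comm, this, smul_smul]
    have e : 2 / (v ⬝ᵥ v) * (2 / (v ⬝ᵥ v)) * (v ⬝ᵥ v) = 2 / (v ⬝ᵥ v) + 2 / (v ⬝ᵥ v) := by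
      field_simp; norm_num
    rw [e, add_smul]; abel

theorem hh_single {n : ℕ} (i : Fin n) (s : ℝ) : ∃ d, hh (Pi.single i s) = diagonal d := by
  refine ⟨fun j => hh (Pi.single i s) j j, ?_⟩
  ext j k
  by_cases h : j = k
  · subst h; simp
  · rw [diagonal_apply_ne _ h]
    simp only [hh, Matrix.sub_apply, Matrix.smul_apply, vecMulVec_apply, one_apply_ne h, Pi.single_apply]
    by_cases hj : j = i
    · have : k ≠ i := fun hk => h (hj.trans hk.symm)
      simp [this]
    · simp [hj]

def Good {n : ℕ} (Q : Matrix (Fin n) (Fin n) ℝ) : Prop :=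
  ∃ d, JoinedIn (unitaryGroup (Fin n) ℝ : Set (Matrix (Fin n) (Fin n) ℝ)) Q (diagonal d)

theorem good_one {n : ℕ} : Good (1 : Matrix (Fin n) (Fin n) ℝ) :=
  ⟨fun _ => 1, by rw [diagonal_one]; exact JoinedIn.refl (one_mem _)⟩

theorem good_mul {n : ℕ} {P Q : Matrix (Fin n) (Fin n) ℝ} (hP : Good P) (hQ : Good Q) :
    Good (P * Q) := by
  obtain ⟨d, p, hp⟩ := hP
  obtain ⟨e, q, hq⟩ := hQ
  refine ⟨fun i => d i * e i, ⟨⟨⟨fun t => p t * q t, ?_⟩, ?_, ?_⟩, ?_⟩⟩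
  · exact p.continuous.matrix_mul q.continuous
  · simp
  · simp
  · intro t
    exact mul_mem (hp t) (hq t)

theorem good_hh {n : ℕ} (v : Fin n → ℝ) : Good (hh v) := by
  by_cases hv : v = 0
  · have : hh v = 1 := by simp [hh, hv]
    rw [this]; exact good_one
  obtain ⟨i, hi⟩ := Function.ne_iff.mp hv
  simp only [Pi.zero_apply] at hi
  obtain ⟨d, hd⟩ := hh_single i (v i)
  refine ⟨d, hd ▸ ?_⟩
  let w : ℝ → Fin n → ℝ := fun t => (1 - t) • v + t • Pi.single i (v i)
  have hwc : Continuous w := by unfold w; fun_prop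
  have hw : ∀ t, w t ⬝ᵥ w t ≠ 0 := by
    intro t h
    rw [dotProduct_self_eq_zero] at h
    have := congrFun h i
    simp [w] at this
    apply hi
    linarith
  refine JoinedIn.ofLine (f := fun t => hh (w t)) ?_ ?_ ?_ ?_
  · apply Continuous.continuousOn
    unfold hh
    have h1 : Continuous fun t => 2 / (w t ⬝ᵥ w t) :=
      continuous_const.div (hwc.dotProduct hwc) hw
    have h2 : Continuous fun t => vecMulVec (w t) (w t) := hwc.matrix_vecMulVec hwc
    fun_prop
  · simp [w]
  · simp [w]
  · rintro _ ⟨t, _, rfl⟩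
    exact hh_mem _

theorem good_all {n : ℕ} {Q : Matrix (Fin n) (Fin n) ℝ} (hQ : Q ∈ unitaryGroup (Fin n) ℝ) :
    Good Q := by
  let T := toEuclideanCLM (n := Fin n) (𝕜 := ℝ)
  let φ := Unitary.linearIsometryEquiv ⟨T Q, Unitary.map_mem T hQ⟩
  have key : ∀ l : List (EuclideanSpace ℝ (Fin n)), ∃ P, Good P ∧
      ∀ x, T P x = (l.map fun v => (ℝ ∙ v)ᗮ.reflection).prod x := by
    intro l
    induction l with
    | nil => exact ⟨1, good_one, fun x => by simp⟩
    | cons v l ih =>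
      obtain ⟨P, hP, h⟩ := ih
      refine ⟨hh v.ofLp * P, good_mul (good_hh _) hP, fun x => ?_⟩
      rw [map_mul, List.map_cons, List.prod_cons]
      change T (hh v.ofLp) (T P x) = (ℝ ∙ v)ᗮ.reflection
        ((l.map fun v => (ℝ ∙ v)ᗮ.reflection).prod x)
      rw [← h, Submodule.reflection_orthogonal_apply,
        Submodule.reflection_singleton_apply]
      generalize T P x = y
      have hn : ‖v‖ ^ 2 = v.ofLp ⬝ᵥ v.ofLp := by
        rw [← real_inner_self_eq_norm_sq, EuclideanSpace.inner_eq_star_dotProduct]; simp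
      have hy : inner ℝ v y = v.ofLp ⬝ᵥ y.ofLp := by
        rw [EuclideanSpace.inner_eq_star_dotProduct, dotProduct_comm]; simp
      ext i
      simp only [T, ofLp_toEuclideanCLM, hh, sub_mulVec, smul_mulVec, vecMulVec_mulVec, one_mulVec, hy]
      simp [hn]
      ring
  obtain ⟨l, -, hl⟩ := φ.reflections_generate_dim
  obtain ⟨P, hP, h⟩ := key l
  have : P = Q := by
    apply T.injective
    ext1 x
    change T P x = T Q x
    rw [h, ← hl]
    rfl
  exact this ▸ hP

theorem joined_diag {m n : ℕ} (A : Matrix (Fin m) (Fin n) ℝ) (b : Fin m → ℝ)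
    {X : Matrix (Fin n) (Fin n) ℝ} (hX : X ∈ SLambda A b) :
    JoinedIn (SLambda A b) X (diagonal (eigs X)) := by
  obtain ⟨hH, hb⟩ := hX
  obtain ⟨Q, hQ, hXQ⟩ := exists_conj hH
  obtain ⟨d, hd⟩ := good_all hQ
  have hm := hd.target_mem
  have hj := hd.map (f := fun R => R * diagonal (eigs X) * star R) (by fun_prop)
  have hend : diagonal d * diagonal (eigs X) * star (diagonal d) = diagonal (eigs X) := by
    have h1 : diagonal d * star (diagonal d) = 1 := (Unitary.mem_iff.mp hm).2
    have h2 : diagonal d * diagonal (eigs X) = diagonal (eigs X) * diagonal d := by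
      simp [diagonal_mul_diagonal, mul_comm]
    rw [h2, mul_assoc, h1, mul_one]
  simp only [hend, ← hXQ] at hj
  refine hj.mono ?_
  rintro _ ⟨R, hR, rfl⟩
  refine ⟨conj_herm R _, ?_⟩
  simp only
  rw [eigs_conj hR (eigs_antitone X)]
  exact hb

theorem joined_all {m n : ℕ} (A : Matrix (Fin m) (Fin n) ℝ) (b : Fin m → ℝ) :
    ∀ X₁ ∈ SLambda A b, ∀ X₂ ∈ SLambda A b, JoinedIn (SLambda A b) X₁ X₂ := by
  intro X hX Y hY
  refine (joined_diag A b hX).trans (JoinedIn.trans ?_ (joined_diag A b hY).symm)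
  refine JoinedIn.ofLine (f := fun t : ℝ => diagonal ((1 - t) • eigs X + t • eigs Y)) ?_ ?_ ?_ ?_
  · apply Continuous.continuousOn
    exact Continuous.matrix_diagonal (by fun_prop)
  · simp
  · simp
  · rintro _ ⟨t, ⟨h0, h1⟩, rfl⟩
    refine ⟨diag_herm _, fun i => ?_⟩
    simp only
    have h1' : 0 ≤ 1 - t := by linarith
    rw [eigs_diag]
    · rw [mulVec_add, mulVec_smul, mulVec_smul]
      simp only [Pi.add_apply, Pi.smul_apply, smul_eq_mul]
      nlinarith [mul_le_mul_of_nonneg_left (hX.2 i) h1', mul_le_mul_of_nonneg_left (hY.2 i) h0]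
    · intro j k hjk
      simp only [Pi.add_apply, Pi.smul_apply, smul_eq_mul]
      exact add_le_add (mul_le_mul_of_nonneg_left (eigs_antitone X hjk) h1')
        (mul_le_mul_of_nonneg_left (eigs_antitone Y hjk) h0)

/-- `S_λ(A,b)` is path-connected: any two of its points are joined by a continuous path
staying in the set; in particular, `S_λ(A,b)` is a connected subset of `S^{n×n}`. -/
theorem statement1 {m n : ℕ} (A : Matrix (Fin m) (Fin n) ℝ) (b : Fin m → ℝ) :
    (∀ X₁ ∈ SLambda A b, ∀ X₂ ∈ SLambda A b, JoinedIn (SLambda A b) X₁ X₂) ∧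
    IsPreconnected (SLambda A b) := by
  refine ⟨joined_all A b, ?_⟩
  rcases (SLambda A b).eq_empty_or_nonempty with h | h
  · rw [h]; exact isPreconnected_empty
  · exact (isPathConnected_iff.mpr ⟨h, joined_all A b⟩).isConnected.isPreconnected
end

section
/- If every row of A ∈ ℝ^{m×n} belongs to the monotone cone ℝⁿ_≥ := {x ∈ ℝⁿ : x₁ ≥ x₂ ≥ … ≥ xₙ}, then for every b ∈ ℝᵐ the set S_λ(A,b) is a convex subset of S^{n×n}. -/
open Matrix

theorem eigs_diag_s2 {n : ℕ} (X : Matrix (Fin n) (Fin n) ℝ) (hX : X.IsHermitian) :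
    ∃ U : Matrix (Fin n) (Fin n) ℝ, Uᵀ * U = 1 ∧ U * Uᵀ = 1 ∧
      Uᵀ * X * U = diagonal (eigs X) := by
  let τ : Equiv.Perm (Fin n) := Fin.revPerm.trans (Tuple.sort hX.eigenvalues)
  let W : Matrix (Fin n) (Fin n) ℝ := hX.eigenvectorUnitary
  have hW : Wᵀ * W = 1 := by
    have := (Matrix.mem_unitaryGroup_iff' (A := W)).1 hX.eigenvectorUnitary.2
    simpa [star_eq_conjTranspose] using this
  have hD : Wᵀ * X * W = diagonal hX.eigenvalues := by
    have := hX.conjStarAlgAut_star_eigenvectorUnitary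
    rw [Unitary.conjStarAlgAut_apply] at this
    simpa [star_eq_conjTranspose] using this
  have hU : (W.submatrix id τ)ᵀ * W.submatrix id τ = 1 := by
    rw [transpose_submatrix, ← submatrix_mul _ _ _ _ _ Function.bijective_id, hW]
    exact submatrix_one_equiv τ
  refine ⟨W.submatrix id τ, hU, mul_eq_one_comm.mp hU, ?_⟩
  have h1 : (W.submatrix id τ)ᵀ * X * W.submatrix id τ = (Wᵀ * X * W).submatrix τ τ := by
    ext i j
    simp [Matrix.mul_apply]
  rw [h1, hD, submatrix_diagonal_equiv]
  congr 1
  ext i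
  rw [eigs, dif_pos hX]
  rfl

theorem orth_le {n : ℕ} (V : Matrix (Fin n) (Fin n) ℝ) (h1 : Vᵀ * V = 1) (h2 : V * Vᵀ = 1)
    (c d : Fin n → ℝ) (hc : Antitone c) (hd : Antitone d) :
    ∑ i, c i * (V * diagonal d * Vᵀ) i i ≤ ∑ i, c i * d i := by
  have hM : (Matrix.of fun i j => V i j ^ 2) ∈ doublyStochastic ℝ (Fin n) := by
    rw [mem_doublyStochastic_iff_sum]
    refine ⟨fun i j => sq_nonneg _, fun i => ?_, fun j => ?_⟩
    · have := congrFun (congrFun h2 i) i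
      simpa [Matrix.mul_apply, sq] using this
    · have := congrFun (congrFun h1 j) j
      simpa [Matrix.mul_apply, sq] using this
  obtain ⟨w, hw0, hw1, hw⟩ := exists_eq_sum_perm_of_mem_doublyStochastic hM
  have h3 : ∀ i, (V * diagonal d * Vᵀ) i i = ∑ σ, w σ * d (σ i) := by
    intro i
    have h4 : ∀ j, V i j ^ 2 = ∑ σ : Equiv.Perm (Fin n), w σ * (if σ i = j then 1 else 0) := by
      intro j
      have := congrFun (congrFun hw i) j
      simp only [Matrix.sum_apply, Matrix.smul_apply, Matrix.of_apply, smul_eq_mul] at this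
      rw [← this]
      refine Finset.sum_congr rfl fun σ _ => ?_
      simp [Equiv.Perm.permMatrix, PEquiv.toMatrix_apply, eq_comm]
    have h5 : (V * diagonal d * Vᵀ) i i = ∑ j, V i j ^ 2 * d j := by
      simp only [Matrix.mul_apply (N := Vᵀ), Matrix.mul_diagonal, transpose_apply]
      exact Finset.sum_congr rfl fun j _ => by ring
    rw [h5]
    simp_rw [h4, Finset.sum_mul]
    rw [Finset.sum_comm]
    refine Finset.sum_congr rfl fun σ _ => ?_
    simp
  simp_rw [h3, Finset.mul_sum]
  rw [Finset.sum_comm]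
  calc _ = ∑ σ, w σ * ∑ i, c i * d (σ i) := by
        refine Finset.sum_congr rfl fun σ _ => ?_
        rw [Finset.mul_sum]
        exact Finset.sum_congr rfl fun j _ => by ring
    _ ≤ ∑ σ, w σ * ∑ i, c i * d i :=
        Finset.sum_le_sum fun σ _ => mul_le_mul_of_nonneg_left
          ((hc.monovary hd).sum_mul_comp_perm_le_sum_mul) (hw0 σ)
    _ = _ := by rw [← Finset.sum_mul, hw1, one_mul]

theorem orth_eigs_le {n : ℕ} (U X : Matrix (Fin n) (Fin n) ℝ) (h1 : Uᵀ * U = 1) (h2 : U * Uᵀ = 1)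
    (hX : X.IsHermitian) (c : Fin n → ℝ) (hc : Antitone c) :
    ∑ i, c i * (Uᵀ * X * U) i i ≤ ∑ i, c i * eigs X i := by
  obtain ⟨W, hW1, hW2, hW⟩ := eigs_diag_s2 X hX
  have h := orth_le (Uᵀ * W)
    (by rw [transpose_mul, transpose_transpose, Matrix.mul_assoc, ← Matrix.mul_assoc U, h2,
          Matrix.one_mul, hW1])
    (by rw [transpose_mul, transpose_transpose, Matrix.mul_assoc, ← Matrix.mul_assoc W, hW2,
          Matrix.one_mul, h1]) c (eigs X) hc (eigs_antitone X)
  have h3 : (Uᵀ * W) * diagonal (eigs X) * (Uᵀ * W)ᵀ = Uᵀ * X * U := by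
    rw [← hW, transpose_mul, transpose_transpose]
    calc _ = Uᵀ * (W * Wᵀ) * X * (W * Wᵀ) * U := by simp only [Matrix.mul_assoc]
      _ = _ := by rw [hW2, Matrix.mul_one, Matrix.mul_one]
  rwa [h3] at h

/-- If each row of `A` is non-increasing (belongs to the monotone cone `ℝⁿ_≥`),
then `S_λ(A,b)` is convex. -/
theorem statement2 {m n : ℕ} (A : Matrix (Fin m) (Fin n) ℝ) (b : Fin m → ℝ)
    (hA : ∀ i : Fin m, ∀ j k : Fin n, j ≤ k → A i k ≤ A i j) :
    Convex ℝ (SLambda A b) := by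
  rintro X ⟨hX, hXb⟩ Y ⟨hY, hYb⟩ s t hs ht hst
  have hZ : (s • X + t • Y).IsHermitian := by
    change (s • X + t • Y)ᴴ = s • X + t • Y
    rw [conjTranspose_add, conjTranspose_smul, conjTranspose_smul, hX.eq, hY.eq]
    rfl
  refine ⟨hZ, fun i => ?_⟩
  obtain ⟨U, hU1, hU2, hU⟩ := eigs_diag_s2 _ hZ
  have hc : Antitone (A i) := fun j k h => hA i j k h
  have ex := orth_eigs_le U X hU1 hU2 hX _ hc
  have ey := orth_eigs_le U Y hU1 hU2 hY _ hc
  have bx : ∑ j, A i j * eigs X j ≤ b i := hXb i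
  have bY : ∑ j, A i j * eigs Y j ≤ b i := hYb i
  change ∑ j, A i j * eigs (s • X + t • Y) j ≤ b i
  have hz : ∀ j, eigs (s • X + t • Y) j = s * (Uᵀ * X * U) j j + t * (Uᵀ * Y * U) j j := by
    intro j
    have := congrFun (congrFun hU j) j
    rw [diagonal_apply_eq] at this
    rw [← this]
    simp [Matrix.mul_add, Matrix.add_mul]
  calc ∑ j, A i j * eigs (s • X + t • Y) j
      = s * ∑ j, A i j * (Uᵀ * X * U) j j + t * ∑ j, A i j * (Uᵀ * Y * U) j j := by
        rw [Finset.mul_sum, Finset.mul_sum, ← Finset.sum_add_distrib]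
        exact Finset.sum_congr rfl fun j _ => by rw [hz]; ring
    _ ≤ s * b i + t * b i := add_le_add (mul_le_mul_of_nonneg_left (ex.trans bx) hs)
        (mul_le_mul_of_nonneg_left (ey.trans bY) ht)
    _ = b i := by rw [← add_mul, hst, one_mul]
end

section
/- If α₁ ≥ α₂ ≥ … ≥ αₙ are real numbers, then the function f : S^{n×n} → ℝ defined by f(X) = Σ_{i=1}^{n} αᵢ λᵢ(X) is convex. -/
open Matrix

lemma exists_basis_aux {n : ℕ} (X : Matrix (Fin n) (Fin n) ℝ) (hX : X.IsHermitian) :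
    Antitone (eigs X) ∧ ∃ v : OrthonormalBasis (Fin n) ℝ (EuclideanSpace ℝ (Fin n)),
      ∀ j, toEuclideanLin X (v j) = eigs X j • v j := by
  have he : eigs X = fun i => (hX.eigenvalues ∘ Tuple.sort hX.eigenvalues) i.rev := by
    unfold eigs
    rw [dif_pos hX]
  refine ⟨?_, hX.eigenvectorBasis.reindex
    ((Tuple.sort hX.eigenvalues).symm.trans Fin.revPerm), ?_⟩
  · rw [he]
    intro i j hij
    exact Tuple.monotone_sort hX.eigenvalues (Fin.rev_le_rev.mpr hij)
  · intro j
    have h := hX.mulVec_eigenvectorBasis (Tuple.sort hX.eigenvalues j.rev)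
    rw [he]
    apply (WithLp.ofLp_injective 2)
    simpa using h

lemma perm_sum_aux {n : ℕ} (α l : Fin n → ℝ) (hα : Antitone α) (hl : Antitone l)
    (P : Matrix (Fin n) (Fin n) ℝ) (hP : P ∈ doublyStochastic ℝ (Fin n)) :
    ∑ i, ∑ j, α i * l j * P i j ≤ ∑ i, α i * l i := by
  obtain ⟨w, hw, hw1, rfl⟩ := exists_eq_sum_perm_of_mem_doublyStochastic hP
  have hm : Monovary α l := hα.monovary hl
  calc ∑ i, ∑ j, α i * l j * (∑ σ, w σ • σ.permMatrix ℝ : Matrix (Fin n) (Fin n) ℝ) i j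
      = ∑ σ : Equiv.Perm (Fin n), w σ * ∑ i, α i * l (σ i) := by
        simp only [Matrix.sum_apply, Matrix.smul_apply, Finset.mul_sum, smul_eq_mul]
        have : ∀ i : Fin n, ∑ j, ∑ σ : Equiv.Perm (Fin n),
            α i * l j * (w σ * σ.permMatrix ℝ i j) = ∑ σ, w σ * (α i * l (σ i)) := by
          intro i
          rw [Finset.sum_comm]
          refine Finset.sum_congr rfl fun σ _ => ?_
          rw [Finset.sum_eq_single (σ i)]
          · simp [Equiv.Perm.permMatrix, PEquiv.toMatrix_apply]
            ring
          · intro j _ hj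
            simp [Equiv.Perm.permMatrix, PEquiv.toMatrix_apply, hj.symm]
          · simp
        rw [Finset.sum_congr rfl fun i _ => this i, Finset.sum_comm]
    _ ≤ ∑ σ : Equiv.Perm (Fin n), w σ * ∑ i, α i * l i :=
        Finset.sum_le_sum fun σ _ =>
          mul_le_mul_of_nonneg_left hm.sum_mul_comp_perm_le_sum_mul (hw σ)
    _ = _ := by rw [← Finset.sum_mul, hw1, one_mul]

lemma upper_aux {n : ℕ} (α : Fin n → ℝ) (hα : Antitone α)
    (X : Matrix (Fin n) (Fin n) ℝ) (hX : X.IsHermitian)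
    (b : OrthonormalBasis (Fin n) ℝ (EuclideanSpace ℝ (Fin n))) :
    ∑ i, α i * inner ℝ (b i) (toEuclideanLin X (b i)) ≤ ∑ i, α i * eigs X i := by
  obtain ⟨hl, v, hv⟩ := exists_basis_aux X hX
  have hP : (Matrix.of fun i j => (inner ℝ (v j) (b i)) ^ 2 : Matrix (Fin n) (Fin n) ℝ)
      ∈ doublyStochastic ℝ (Fin n) := by
    rw [mem_doublyStochastic_iff_sum]
    refine ⟨fun i j => sq_nonneg _, fun i => ?_, fun j => ?_⟩
    · have := v.sum_sq_norm_inner_right (b i)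
      simpa using this
    · have := b.sum_sq_norm_inner_left (v j)
      simpa using this
  refine le_trans (le_of_eq ?_) (perm_sum_aux α (eigs X) hα hl _ hP)
  refine Finset.sum_congr rfl fun i _ => ?_
  have h1 : toEuclideanLin X (b i) = ∑ j, (inner ℝ (v j) (b i)) • (eigs X j • v j) := by
    conv_lhs => rw [← v.sum_repr' (b i)]
    simp only [map_sum, map_smul, hv]
  rw [h1, inner_sum, Finset.mul_sum]
  refine Finset.sum_congr rfl fun j _ => ?_
  rw [inner_smul_right, inner_smul_right, real_inner_comm (v j) (b i), Matrix.of_apply]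
  ring

/-- If `α₁ ≥ α₂ ≥ … ≥ αₙ`, then `X ↦ Σᵢ αᵢ λᵢ(X)` is a convex function on the set of
real symmetric `n×n` matrices. -/
theorem statement3 {n : ℕ} (α : Fin n → ℝ) (hα : Antitone α) :
    ConvexOn ℝ {X : Matrix (Fin n) (Fin n) ℝ | X.IsHermitian}
      (fun X => ∑ i, α i * eigs X i) := by
  have hc : Convex ℝ {X : Matrix (Fin n) (Fin n) ℝ | X.IsHermitian} := by
    intro X hX Y hY a b _ _ _
    change (a • X + b • Y)ᴴ = a • X + b • Y
    have hX' : Xᴴ = X := hX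
    have hY' : Yᴴ = Y := hY
    rw [conjTranspose_add, conjTranspose_smul, conjTranspose_smul, hX', hY']
    simp
  refine ⟨hc, ?_⟩
  intro X hX Y hY a b ha hb hab
  obtain ⟨-, v, hv⟩ := exists_basis_aux _ (hc hX hY ha hb hab)
  have h1 := mul_le_mul_of_nonneg_left (upper_aux α hα X hX v) ha
  have h2 := mul_le_mul_of_nonneg_left (upper_aux α hα Y hY v) hb
  refine le_trans (le_of_eq ?_) (add_le_add h1 h2)
  rw [Finset.mul_sum, Finset.mul_sum, ← Finset.sum_add_distrib]
  refine Finset.sum_congr rfl fun i _ => ?_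
  have h3 : eigs (a • X + b • Y) i = inner ℝ (v i) (toEuclideanLin (a • X + b • Y) (v i)) := by
    rw [hv, inner_smul_right, real_inner_self_eq_norm_sq, v.norm_eq_one]
    simp
  rw [h3, map_add, map_smul, map_smul, LinearMap.add_apply, LinearMap.smul_apply,
    LinearMap.smul_apply, inner_add_right, inner_smul_right, inner_smul_right]
  ring
end

section
/- Let F : S^{n×n} → ℝ be continuously (Fréchet) differentiable with gradient ∇F(X) ∈ S^{n×n}, let a₁,…,a_p ∈ ℝⁿ and b ∈ ℝᵖ, and define gᵢ(X) := aᵢᵀ λ(X) − bᵢ for i = 1,…,p. Let X* be a local minimizer of F over {X ∈ S^{n×n} : gᵢ(X) ≤ 0, i = 1,…,p} such that the n eigenvalues of X* are pairwise distinct, and write the eigendecomposition X* = V* Diag(λ(X*)) (V*)ᵀ with V* orthogonal and columns ordered to match the descending eigenvalues. If the vectors {aᵢ : i ∈ I(X*)} are linearly independent, where I(X*) := {i : gᵢ(X*) = 0}, then there exist multipliers μ ∈ ℝᵖ with μᵢ ≥ 0 and μᵢ gᵢ(X*) = 0 for all i, such that ∇F(X*) + Σ_{i=1}^{p} μᵢ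 V* Diag(aᵢ) (V*)ᵀ = 0. -/
open Matrix

attribute [local instance] Matrix.frobeniusNormedAddCommGroup Matrix.frobeniusNormedSpace

lemma aux_multiset_comp {n : ℕ} (f : Fin n → ℝ) (σ : Equiv.Perm (Fin n)) :
    Multiset.map (f ∘ σ) Finset.univ.val = Multiset.map f Finset.univ.val := by
  rw [← Multiset.map_map]
  congr 1
  simp

lemma aux_herm {n : ℕ} (U : Matrix (Fin n) (Fin n) ℝ) (d : Fin n → ℝ) :
    (U * Matrix.diagonal d * Uᵀ).IsHermitian := by
  simp [Matrix.IsHermitian, Matrix.conjTranspose_eq_transpose_of_trivial, Matrix.mul_assoc]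

lemma aux_eigs {n : ℕ} (U : Matrix (Fin n) (Fin n) ℝ) (hU : Uᵀ * U = 1)
    (d : Fin n → ℝ) (hd : Antitone d) : eigs (U * Matrix.diagonal d * Uᵀ) = d := by
  have hX := aux_herm U d
  have h1 : Multiset.map hX.eigenvalues Finset.univ.val = Multiset.map d Finset.univ.val := by
    have h := hX.roots_charpoly_eq_eigenvalues
    have h2 : (U * Matrix.diagonal d * Uᵀ).charpoly = (Matrix.diagonal d).charpoly := by
      rw [Matrix.charpoly_mul_comm, ← Matrix.mul_assoc, hU, Matrix.one_mul]
    rw [h2, Matrix.charpoly_diagonal, Polynomial.roots_prod _ _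
      (by simp [Finset.prod_ne_zero_iff, Polynomial.X_sub_C_ne_zero])] at h
    simpa [Function.comp_def] using h.symm
  have h3 : hX.eigenvalues ∘ Tuple.sort hX.eigenvalues = d ∘ Fin.revPerm := by
    rw [← List.ofFn_inj]
    apply List.Perm.eq_of_pairwise' (r := (· ≤ ·))
    · exact (List.sortedLE_ofFn_iff.2 (Tuple.monotone_sort _)).pairwise
    · refine (List.sortedLE_ofFn_iff.2 ?_).pairwise
      intro i j hij
      exact hd (Fin.rev_le_rev.2 hij)
    · rw [← Multiset.coe_eq_coe, ← Fin.univ_val_map, ← Fin.univ_val_map, aux_multiset_comp,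
        aux_multiset_comp, h1]
  unfold eigs
  rw [dif_pos hX, h3]
  ext i
  simp

lemma aux_eigs_anti {n : ℕ} (X : Matrix (Fin n) (Fin n) ℝ) (hX : X.IsHermitian) :
    Antitone (eigs X) := by
  unfold eigs
  rw [dif_pos hX]
  intro i j hij
  exact Tuple.monotone_sort _ (Fin.rev_le_rev.2 hij)

section
attribute [local instance] Matrix.frobeniusNormedRing Matrix.frobeniusNormedAlgebra

lemma aux_curve {n : ℕ} (V K D E : Matrix (Fin n) (Fin n) ℝ) :
    HasDerivAt (fun t : ℝ => (V * NormedSpace.exp (t • K)) * (D + t • E) *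
      (NormedSpace.exp (t • (-K)) * Vᵀ)) (V * (K * D - D * K + E) * Vᵀ) 0 := by
  have h1 := (hasDerivAt_exp_smul_const (𝕂 := ℝ) K 0).const_mul V
  have h2 := (hasDerivAt_exp_smul_const (𝕂 := ℝ) (-K) 0).mul_const Vᵀ
  have h3 : HasDerivAt (fun t : ℝ => D + t • E) E 0 := by
    have h := ((hasDerivAt_id (0:ℝ)).smul_const E).const_add D
    rw [one_smul] at h
    exact h
  have := (h1.mul h3).mul h2
  convert! this using 1
  simp
  noncomm_ring
end

lemma aux_exp_orth {n : ℕ} (K : Matrix (Fin n) (Fin n) ℝ) (hK : Kᵀ = -K) (t : ℝ) :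
    NormedSpace.exp (t • (-K)) = (NormedSpace.exp (t • K))ᵀ ∧
    (NormedSpace.exp (t • K))ᵀ * NormedSpace.exp (t • K) = 1 := by
  have h1 : NormedSpace.exp (t • (-K)) = (NormedSpace.exp (t • K))ᵀ := by
    rw [← Matrix.exp_transpose, Matrix.transpose_smul, hK]
  refine ⟨h1, ?_⟩
  rw [← h1, ← Matrix.exp_add_of_commute]
  · simp
  · rw [smul_neg]; exact (Commute.refl _).neg_left

lemma aux_deriv_nonneg (φ : ℝ → ℝ) (c : ℝ) (h : HasDerivAt φ c 0)
    (hm : ∀ᶠ t in nhdsWithin 0 (Set.Ioi 0), φ 0 ≤ φ t) : 0 ≤ c := by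
  have h1 := (hasDerivWithinAt_iff_tendsto_slope' (s := Set.Ioi (0:ℝ)) (by simp)).1
    (h.hasDerivWithinAt (s := Set.Ioi 0))
  refine ge_of_tendsto h1 ?_
  filter_upwards [hm, self_mem_nhdsWithin] with t ht ht0
  rw [slope_def_field]
  have : (0:ℝ) < t := ht0
  apply div_nonneg <;> linarith

lemma aux_inner {n : ℕ} (V G H : Matrix (Fin n) (Fin n) ℝ) :
    ∑ i, ∑ j, G i j * (V * H * Vᵀ) i j = ∑ i, ∑ j, (Vᵀ * G * V) i j * H i j := by
  have key : ∀ A B : Matrix (Fin n) (Fin n) ℝ, ∑ i, ∑ j, A i j * B i j = (Aᵀ * B).trace := by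
    intro A B
    simp only [Matrix.trace, Matrix.diag, Matrix.mul_apply, Matrix.transpose_apply]
    exact Finset.sum_comm
  rw [key, key, Matrix.transpose_mul, Matrix.transpose_mul, Matrix.transpose_transpose,
    ← Matrix.mul_assoc, Matrix.trace_mul_comm]
  simp only [Matrix.mul_assoc]

lemma aux_farkas {n : ℕ} {ι : Type*} [Fintype ι] (a : ι → Fin n → ℝ)
    (hLI : LinearIndependent ℝ a) (c : Fin n → ℝ)
    (h : ∀ d : Fin n → ℝ, (∀ i, ∑ j, a i j * d j ≤ 0) → 0 ≤ ∑ j, c j * d j) :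
    ∃ μ : ι → ℝ, (∀ i, 0 ≤ μ i) ∧ ∀ j, c j + ∑ i, μ i * a i j = 0 := by
  classical
  let L : (Fin n → ℝ) → ((Fin n → ℝ) →ₗ[ℝ] ℝ) := fun v => dotProductBilin ℝ ℝ v
  have hL : ∀ v d, L v d = ∑ j, v j * d j := fun v d => rfl
  have hmem : L c ∈ Submodule.span ℝ (Set.range fun i => L (a i)) := by
    apply mem_span_of_iInf_ker_le_ker
    intro d hd
    simp only [Submodule.mem_iInf, LinearMap.mem_ker, hL] at hd ⊢
    have h1 := h d (fun i => (hd i).le)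
    have h2 := h (-d) (fun i => by simp [hd i])
    simp at h2
    linarith
  obtain ⟨ν, hν⟩ := (Submodule.mem_span_range_iff_exists_fun ℝ).1 hmem
  have hc : ∀ j, ∑ i, ν i * a i j = c j := by
    intro j
    have := congrArg (fun f => f (Pi.single j 1)) hν
    simpa [hL, LinearMap.sum_apply, Pi.single_apply] using this
  refine ⟨fun i => - ν i, ?_, fun j => by simp [← hc j]⟩
  intro i
  obtain ⟨f, hf⟩ := LinearMap.exists_extend
    ((Finsupp.lapply i : (ι →₀ ℝ) →ₗ[ℝ] ℝ).comp hLI.repr)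
  have hfa : ∀ k, f (a k) = if k = i then 1 else 0 := by
    intro k
    have := LinearMap.congr_fun hf ⟨a k, Submodule.subset_span ⟨k, rfl⟩⟩
    simp at this
    rw [this, hLI.repr_eq_single k _ rfl]
    simp [Finsupp.single_apply]
  have hfd : ∀ v, ∑ j, v j * f (Pi.single j 1) = f v := by
    intro v
    conv_rhs => rw [pi_eq_sum_univ' v, map_sum]
    refine Finset.sum_congr rfl fun j _ => ?_
    rw [map_smul, smul_eq_mul]
  have := h (fun j => - f (Pi.single j 1)) (fun k => by
    simp only [mul_neg, Finset.sum_neg_distrib, hfd, hfa]; split_ifs <;> simp)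
  simp only [mul_neg, Finset.sum_neg_distrib, hfd] at this
  have hcv : c = ∑ k, ν k • a k := by ext j; simp [← hc j]
  rw [hcv, map_sum] at this
  simpa [hfa] using this

/-- KKT conditions at a local minimizer with pairwise distinct eigenvalues:
if `F` is continuously differentiable (with symmetric Frobenius gradient `gradF`),
`gᵢ(X) = aᵢᵀ λ(X) − bᵢ`, `X*` is a local minimizer of `F` over
`{X ∈ S^{n×n} : gᵢ(X) ≤ 0}` whose eigenvalues are pairwise distinct, with
eigendecomposition `X* = V Diag(λ(X*)) Vᵀ` (`V` orthogonal), and the active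
gradient vectors `{aᵢ : gᵢ(X*) = 0}` are linearly independent, then there are
multipliers `μ ≥ 0` with `μᵢ gᵢ(X*) = 0` and
`∇F(X*) + Σᵢ μᵢ V Diag(aᵢ) Vᵀ = 0`. -/
theorem statement4 {n p : ℕ}
    (F : Matrix (Fin n) (Fin n) ℝ → ℝ)
    (gradF : Matrix (Fin n) (Fin n) ℝ → Matrix (Fin n) (Fin n) ℝ)
    (hdiff : Differentiable ℝ F)
    (hgrad : ∀ X H, fderiv ℝ F X H = ∑ i, ∑ j, gradF X i j * H i j)
    (hgradCont : Continuous gradF)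
    (hgradSym : ∀ X, (gradF X).IsHermitian)
    (a : Fin p → Fin n → ℝ) (b : Fin p → ℝ)
    (g : Matrix (Fin n) (Fin n) ℝ → Fin p → ℝ)
    (hg : ∀ X i, g X i = (∑ j, a i j * eigs X j) - b i)
    (Xstar : Matrix (Fin n) (Fin n) ℝ)
    (hXfeas : Xstar ∈ {X : Matrix (Fin n) (Fin n) ℝ | X.IsHermitian ∧ ∀ i, g X i ≤ 0})
    (hmin : IsLocalMinOn F {X : Matrix (Fin n) (Fin n) ℝ | X.IsHermitian ∧ ∀ i, g X i ≤ 0} Xstar)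
    (hdistinct : Function.Injective (eigs Xstar))
    (V : Matrix (Fin n) (Fin n) ℝ)
    (hV : Vᵀ * V = 1) (hV' : V * Vᵀ = 1)
    (hdecomp : Xstar = V * Matrix.diagonal (eigs Xstar) * Vᵀ)
    (hLI : LinearIndependent ℝ (fun i : {i : Fin p // g Xstar i = 0} => a i.1)) :
    ∃ μ : Fin p → ℝ, (∀ i, 0 ≤ μ i) ∧ (∀ i, μ i * g Xstar i = 0) ∧
      gradF Xstar + ∑ i, μ i • (V * Matrix.diagonal (a i) * Vᵀ) = 0 := by
  have hXH : Xstar.IsHermitian := hXfeas.1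
  set lam := eigs Xstar with hlam
  have hanti : Antitone lam := aux_eigs_anti Xstar hXH
  have hstrict : StrictAnti lam := hanti.strictAnti_of_injective hdistinct
  set G := Vᵀ * gradF Xstar * V with hG
  -- key first-order inequality
  have key : ∀ (K : Matrix (Fin n) (Fin n) ℝ) (d : Fin n → ℝ), Kᵀ = -K →
      (∀ i, g Xstar i = 0 → ∑ j, a i j * d j ≤ 0) →
      0 ≤ ∑ i, ∑ j, G i j *
        (K * Matrix.diagonal lam - Matrix.diagonal lam * K + Matrix.diagonal d) i j := by
    intro K d hK hd
    rw [hG, ← aux_inner, ← hgrad]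
    have hc := aux_curve V K (Matrix.diagonal lam) (Matrix.diagonal d)
    set X : ℝ → Matrix (Fin n) (Fin n) ℝ := fun t : ℝ => (V * NormedSpace.exp (t • K)) *
      (Matrix.diagonal lam + t • Matrix.diagonal d) *
      (NormedSpace.exp (t • (-K)) * Vᵀ) with hX
    have hX0 : X 0 = Xstar := by
      rw [hdecomp]
      simp [hX]
    have hF : HasDerivAt (fun t => F (X t)) (fderiv ℝ F Xstar
        (V * (K * Matrix.diagonal lam - Matrix.diagonal lam * K + Matrix.diagonal d) * Vᵀ)) 0 := by
      have h1 : HasFDerivAt F (fderiv ℝ F Xstar) (X 0) := by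
        rw [hX0]; exact (hdiff Xstar).hasFDerivAt
      exact h1.comp_hasDerivAt 0 hc
    apply aux_deriv_nonneg _ _ hF
    have hXt : Filter.Tendsto X (nhdsWithin 0 (Set.Ioi 0)) (nhds Xstar) := by
      have := hc.continuousAt.tendsto
      rw [hX0] at this
      exact this.mono_left nhdsWithin_le_nhds
    have hmon : ∀ᶠ t in nhdsWithin (0:ℝ) (Set.Ioi 0), Antitone (lam + t • d) := by
      have : ∀ᶠ t in nhds (0:ℝ), ∀ i j, i < j → (lam + t • d) j < (lam + t • d) i := by
        rw [Filter.eventually_all]; intro i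
        rw [Filter.eventually_all]; intro j
        by_cases hij : i < j
        · simp only [hij, true_imp_iff]
          have c1 : Continuous fun t : ℝ => (lam + t • d) j := by
            simp only [Pi.add_apply, Pi.smul_apply, smul_eq_mul]; fun_prop
          have c2 : Continuous fun t : ℝ => (lam + t • d) i := by
            simp only [Pi.add_apply, Pi.smul_apply, smul_eq_mul]; fun_prop
          exact c1.continuousAt.eventually_lt c2.continuousAt (by simpa using hstrict hij)
        · simp [hij]
      filter_upwards [nhdsWithin_le_nhds this] with t ht
      have : StrictAnti (lam + t • d) := fun i j hij => ht i j hij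
      exact this.antitone
    have hgt : ∀ᶠ t in nhdsWithin (0:ℝ) (Set.Ioi 0), ∀ i,
        g Xstar i + t * ∑ j, a i j * d j ≤ 0 := by
      rw [Filter.eventually_all]; intro i
      by_cases hi : g Xstar i = 0
      · filter_upwards [self_mem_nhdsWithin] with t ht
        rw [hi, zero_add]
        exact mul_nonpos_of_nonneg_of_nonpos (le_of_lt ht) (hd i hi)
      · have hlt : g Xstar i < 0 := lt_of_le_of_ne (hXfeas.2 i) hi
        have c1 : Continuous fun t : ℝ => g Xstar i + t * ∑ j, a i j * d j := by fun_prop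
        have := c1.continuousAt.eventually_lt (x₀ := 0)
          (continuousAt_const (y := (0:ℝ))) (by simpa using hlt)
        filter_upwards [nhdsWithin_le_nhds this] with t ht using ht.le
    have hfeas : ∀ᶠ t in nhdsWithin (0:ℝ) (Set.Ioi 0),
        X t ∈ {X : Matrix (Fin n) (Fin n) ℝ | X.IsHermitian ∧ ∀ i, g X i ≤ 0} := by
      filter_upwards [hmon, hgt] with t h1 h2
      obtain ⟨e1, e2⟩ := aux_exp_orth K hK t
      have hXe : X t = (V * NormedSpace.exp (t • K)) * Matrix.diagonal (lam + t • d) *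
          (V * NormedSpace.exp (t • K))ᵀ := by
        simp only [hX]
        rw [e1, Matrix.transpose_mul, ← Matrix.diagonal_smul, Matrix.diagonal_add]
        rfl
      have hU : (V * NormedSpace.exp (t • K))ᵀ * (V * NormedSpace.exp (t • K)) = 1 := by
        rw [Matrix.transpose_mul, Matrix.mul_assoc, ← Matrix.mul_assoc Vᵀ, hV, Matrix.one_mul, e2]
      rw [hXe]
      refine ⟨aux_herm _ _, fun i => ?_⟩
      rw [hg, aux_eigs _ hU _ h1]
      have := h2 i
      rw [hg, ← hlam, Finset.mul_sum] at this
      have e : ∑ j, a i j * (lam + t • d) j = ∑ j, a i j * lam j + ∑ j, t * (a i j * d j) := by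
        rw [← Finset.sum_add_distrib]
        refine Finset.sum_congr rfl fun j _ => ?_
        simp only [Pi.add_apply, Pi.smul_apply, smul_eq_mul]; ring
      rw [e]; linarith
    have := (tendsto_nhdsWithin_iff.2 ⟨hXt, hfeas⟩).eventually hmin
    filter_upwards [this] with t ht
    simpa only [hX0] using ht
  -- off-diagonal entries vanish
  have hGsym : ∀ i j, G i j = G j i := by
    intro i j
    have h0 : (gradF Xstar)ᵀ = gradF Xstar := by
      have := hgradSym Xstar
      rwa [Matrix.IsHermitian, Matrix.conjTranspose_eq_transpose_of_trivial] at this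
    have : Gᵀ = G := by
      rw [hG, Matrix.transpose_mul, Matrix.transpose_mul, h0, Matrix.transpose_transpose,
        Matrix.mul_assoc]
    conv_lhs => rw [← this]
    rfl
  have hoff : ∀ i j, i ≠ j → G i j = 0 := by
    obtain ⟨K, hKd⟩ : ∃ K : Matrix (Fin n) (Fin n) ℝ, ∀ i j, K i j = - G i j / (lam j - lam i) :=
      ⟨Matrix.of fun i j => - G i j / (lam j - lam i), fun i j => rfl⟩
    have h := key K 0 (by
      ext i j
      simp only [hKd, Matrix.transpose_apply, Matrix.of_apply, Matrix.neg_apply]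
      rw [hGsym j i, ← neg_sub (lam j) (lam i), div_neg]) (by simp)
    have e : ∀ i j, G i j * (K * Matrix.diagonal lam - Matrix.diagonal lam * K +
        Matrix.diagonal (0 : Fin n → ℝ)) i j
        = - (if i = j then 0 else G i j ^ 2) := by
      intro i j
      simp only [Matrix.add_apply, Matrix.sub_apply, Matrix.mul_diagonal, Matrix.diagonal_mul, hKd]
      by_cases hij : i = j
      · subst hij; simp
      · have : lam j - lam i ≠ 0 := sub_ne_zero.2 fun h => hij (hdistinct h.symm)
        simp only [Matrix.diagonal_apply_ne _ hij, hij, if_false]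
        field_simp
        ring
    simp only [e, Finset.sum_neg_distrib] at h
    have hnn : ∀ i j, 0 ≤ (if i = j then 0 else G i j ^ 2) := by
      intro i j; split_ifs <;> positivity
    have hz : ∑ i, ∑ j, (if i = j then 0 else G i j ^ 2) = 0 :=
      le_antisymm (by linarith) (Finset.sum_nonneg fun i _ => Finset.sum_nonneg fun j _ => hnn i j)
    intro i j hij
    have h1 := (Finset.sum_eq_zero_iff_of_nonneg
      (fun i _ => Finset.sum_nonneg fun j _ => hnn i j)).1 hz i (Finset.mem_univ _)
    have h2 := (Finset.sum_eq_zero_iff_of_nonneg (fun j _ => hnn i j)).1 h1 j (Finset.mem_univ _)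
    simpa [hij] using h2
  -- diagonal part
  obtain ⟨μ, hμ0, hμ⟩ := aux_farkas _ hLI (fun j => G j j) (by
    intro d hd
    have h := key 0 d (by simp) (fun i hi => hd ⟨i, hi⟩)
    simpa [Matrix.diagonal_apply] using h)
  classical
  let ν : Fin p → ℝ := fun i => if h : g Xstar i = 0 then μ ⟨i, h⟩ else 0
  have hsum : ∀ j, ∑ i, ν i * a i j = ∑ i : {i : Fin p // g Xstar i = 0}, μ i * a i.1 j := by
    intro j
    rw [← Finset.sum_subset (Finset.subset_univ (Finset.univ.filter fun i => g Xstar i = 0))]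
    · rw [Finset.sum_subtype (p := fun i => g Xstar i = 0) _ (by simp)]
      refine Finset.sum_congr rfl fun i _ => ?_
      simp [ν, i.2]
    · intro i _ hi
      have : ¬ g Xstar i = 0 := by simpa using hi
      simp [ν, this]
  refine ⟨ν, ?_, ?_, ?_⟩
  · intro i
    simp only [ν]
    split_ifs with h
    · exact hμ0 _
    · exact le_rfl
  · intro i
    by_cases h : g Xstar i = 0
    · simp [h]
    · simp [ν, h]
  · have h1 : gradF Xstar = V * G * Vᵀ := by
      rw [hG]
      calc gradF Xstar = (V * Vᵀ) * gradF Xstar * (V * Vᵀ) := by rw [hV']; simp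
        _ = _ := by simp only [Matrix.mul_assoc]
    have h2 : G + ∑ i, ν i • Matrix.diagonal (a i) = 0 := by
      ext i j
      rw [Matrix.add_apply, Matrix.sum_apply]
      simp only [Matrix.smul_apply, smul_eq_mul, Matrix.zero_apply]
      by_cases hij : i = j
      · subst hij
        simp only [Matrix.diagonal_apply_eq]
        rw [hsum]; exact hμ i
      · simp [Matrix.diagonal_apply_ne _ hij, hoff i j hij]
    have h3 : ∑ i, ν i • (V * Matrix.diagonal (a i) * Vᵀ)
        = V * (∑ i, ν i • Matrix.diagonal (a i)) * Vᵀ := by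
      simp [Matrix.mul_sum, Matrix.sum_mul]
    rw [h1, h3, ← Matrix.add_mul, ← Matrix.mul_add, h2]
    simp
end

section
/- Let C ∈ ℝ^{n×n} and write (1/2)(C + Cᵀ) = P Ω Pᵀ with P orthogonal and Ω = Diag(ω₁,…,ωₙ) with ω₁ ≥ ω₂ ≥ … ≥ ωₙ. Suppose λ* attains the minimum of Σ_{i=1}^{n} ωᵢ λ_{n+1−i} over Λ(A,b) := {λ ∈ ℝⁿ : Aλ ≤ b, λ₁ ≥ … ≥ λₙ}. Then X* := P Diag(λ*ₙ, λ*_{n−1}, …, λ*₁) Pᵀ belongs to S_λ(A,b) and is a global minimizer: ⟨C, X*⟩ ≤ ⟨C, X⟩ for all X ∈ S_λ(A,b), where ⟨C, X⟩ := Tr(Cᵀ X). -/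
open Matrix

/-- The polyhedron `Λ(A,b) = {λ ∈ ℝⁿ : Aλ ≤ b, λ₁ ≥ … ≥ λₙ}`. -/
def LambdaSet {m n : ℕ} (A : Matrix (Fin m) (Fin n) ℝ) (b : Fin m → ℝ) :
    Set (Fin n → ℝ) :=
  {l | (∀ i, A.mulVec l i ≤ b i) ∧ Antitone l}


lemma eigs_conj_s6 {n : ℕ} (P : Matrix (Fin n) (Fin n) ℝ) (hP : Pᵀ * P = 1) (lam : Fin n → ℝ)
    (hl : Antitone lam)
    (hX : (P * Matrix.diagonal (fun i : Fin n => lam i.rev) * Pᵀ).IsHermitian) :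
    eigs (P * Matrix.diagonal (fun i : Fin n => lam i.rev) * Pᵀ) = lam := by
  have hroots := hX.roots_charpoly_eq_eigenvalues
  have hc : (P * Matrix.diagonal (fun i : Fin n => lam i.rev) * Pᵀ).charpoly
      = ∏ i : Fin n, (Polynomial.X - Polynomial.C (lam i.rev)) := by
    rw [Matrix.charpoly_mul_comm, ← Matrix.mul_assoc, hP, Matrix.one_mul, Matrix.charpoly_diagonal]
  have hr : (∏ i : Fin n, (Polynomial.X - Polynomial.C (lam i.rev))).roots
      = Multiset.map (fun i : Fin n => lam i.rev) Finset.univ.val := by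
    rw [Polynomial.roots_prod]
    · simp
    · simp [Finset.prod_ne_zero_iff, Polynomial.X_sub_C_ne_zero]
  rw [hc, hr] at hroots
  have hroots' : Multiset.map (fun i : Fin n => lam i.rev) Finset.univ.val
      = Multiset.map hX.eigenvalues Finset.univ.val := hroots
  rw [Fin.univ_val_map, Fin.univ_val_map, Multiset.coe_eq_coe] at hroots'
  have hp := hroots'.trans (Equiv.Perm.ofFn_comp_perm (Tuple.sort hX.eigenvalues) hX.eigenvalues).symm
  have hm : Monotone (fun i : Fin n => lam i.rev) := fun i j hij => hl (Fin.rev_le_rev.2 hij)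
  have h2 := List.ofFn_injective
    (hp.eq_of_sortedLE hm.sortedLE_ofFn (Tuple.monotone_sort hX.eigenvalues).sortedLE_ofFn)
  funext i
  rw [eigs, dif_pos hX, ← h2]
  simp

lemma dstoch {n : ℕ} (W : Matrix (Fin n) (Fin n) ℝ) (h1 : Wᵀ * W = 1) (h2 : W * Wᵀ = 1)
    (ω s d : Fin n → ℝ) (τ : Equiv.Perm (Fin n)) (hd : d = s ∘ τ) (hω : Antitone ω)
    (hs : Monotone s) :
    ∑ i, ω i * s i ≤ ∑ i, ∑ j, ω i * d j * W i j ^ 2 := by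
  have hM : (Matrix.of fun i j => W i j ^ 2) ∈ doublyStochastic ℝ (Fin n) := by
    rw [mem_doublyStochastic_iff_sum]
    refine ⟨fun i j => by simp [sq_nonneg], fun i => ?_, fun j => ?_⟩
    · have := congrFun (congrFun h2 i) i
      simpa [Matrix.mul_apply, pow_two] using this
    · have := congrFun (congrFun h1 j) j
      simpa [Matrix.mul_apply, pow_two] using this
  obtain ⟨w, hw0, hw1, hw⟩ := exists_eq_sum_perm_of_mem_doublyStochastic hM
  have hW : ∀ i j, W i j ^ 2 = ∑ σ : Equiv.Perm (Fin n), w σ * (if σ i = j then 1 else 0) := by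
    intro i j
    have := congrFun (congrFun hw i) j
    simp only [Matrix.sum_apply, Matrix.smul_apply, Matrix.of_apply, smul_eq_mul] at this
    rw [← this]
    refine Finset.sum_congr rfl fun σ _ => ?_
    simp [Equiv.Perm.permMatrix, PEquiv.toMatrix_apply, eq_comm]
  have key : ∑ i, ∑ j, ω i * d j * W i j ^ 2 = ∑ σ : Equiv.Perm (Fin n), w σ * ∑ i, ω i * d (σ i) := by
    simp_rw [hW, Finset.mul_sum]
    rw [Finset.sum_comm' (t' := Finset.univ) (s' := fun _ => Finset.univ) (by simp)]
    rw [Finset.sum_comm]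
    simp_rw [Finset.sum_comm (s := (Finset.univ : Finset (Fin n))) (t := (Finset.univ : Finset (Equiv.Perm (Fin n))))]
    refine Finset.sum_congr rfl fun σ _ => ?_
    refine Finset.sum_congr rfl fun i _ => ?_
    simp
    ring
  have hav : Antivary ω s := hω.antivary hs
  calc ∑ i, ω i * s i = ∑ σ : Equiv.Perm (Fin n), w σ * ∑ i, ω i * s i := by
        rw [← Finset.sum_mul, hw1, one_mul]
    _ ≤ ∑ σ : Equiv.Perm (Fin n), w σ * ∑ i, ω i * d (σ i) := by
        refine Finset.sum_le_sum fun σ _ => mul_le_mul_of_nonneg_left ?_ (hw0 σ)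
        subst hd
        exact hav.sum_mul_le_sum_mul_comp_perm (σ := σ.trans τ)
    _ = _ := key.symm

lemma trace_symm {n : ℕ} (C X : Matrix (Fin n) (Fin n) ℝ) (hX : Xᵀ = X) :
    (Cᵀ * X).trace = (((1 / 2 : ℝ) • (C + Cᵀ)) * X).trace := by
  have : (C * X).trace = (Cᵀ * X).trace := by
    rw [← Matrix.trace_transpose, Matrix.transpose_mul, hX, Matrix.trace_mul_comm]
  rw [Matrix.smul_mul, Matrix.trace_smul, Matrix.add_mul, Matrix.trace_add, this, smul_eq_mul]
  ring

lemma trace_quad {n : ℕ} (P U : Matrix (Fin n) (Fin n) ℝ) (ω d : Fin n → ℝ) :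
    ((P * Matrix.diagonal ω * Pᵀ) * (U * Matrix.diagonal d * Uᵀ)).trace
      = ∑ i, ∑ j, ω i * d j * (Pᵀ * U) i j ^ 2 := by
  have : ((P * Matrix.diagonal ω * Pᵀ) * (U * Matrix.diagonal d * Uᵀ)).trace
      = ((Matrix.diagonal ω * (Pᵀ * U)) * (Matrix.diagonal d * (Pᵀ * U)ᵀ)).trace := by
    rw [Matrix.transpose_mul, Matrix.transpose_transpose]
    simp only [Matrix.mul_assoc]
    rw [Matrix.trace_mul_comm]
    simp only [Matrix.mul_assoc]
  rw [this, Matrix.trace]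
  refine Finset.sum_congr rfl fun i _ => ?_
  rw [Matrix.diag_apply, Matrix.mul_apply]
  refine Finset.sum_congr rfl fun j _ => ?_
  rw [Matrix.diagonal_mul, Matrix.diagonal_mul, Matrix.transpose_apply]
  ring

theorem statement6 {m n : ℕ} (A : Matrix (Fin m) (Fin n) ℝ) (b : Fin m → ℝ)
    (C P : Matrix (Fin n) (Fin n) ℝ) (ω : Fin n → ℝ)
    (hP : Pᵀ * P = 1) (hP' : P * Pᵀ = 1)
    (hω : Antitone ω)
    (hdecomp : (1 / 2 : ℝ) • (C + Cᵀ) = P * Matrix.diagonal ω * Pᵀ)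
    (lam : Fin n → ℝ)
    (hfeas : lam ∈ LambdaSet A b)
    (hopt : ∀ μ ∈ LambdaSet A b, ∑ i : Fin n, ω i * lam i.rev ≤ ∑ i : Fin n, ω i * μ i.rev) :
    P * Matrix.diagonal (fun i : Fin n => lam i.rev) * Pᵀ ∈ SLambda A b ∧
    ∀ X ∈ SLambda A b,
      (Cᵀ * (P * Matrix.diagonal (fun i : Fin n => lam i.rev) * Pᵀ)).trace ≤ (Cᵀ * X).trace := by
  have hT : (P * Matrix.diagonal (fun i : Fin n => lam i.rev) * Pᵀ)ᵀ
      = P * Matrix.diagonal (fun i : Fin n => lam i.rev) * Pᵀ := by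
    simp [Matrix.transpose_mul, Matrix.mul_assoc]
  have hH : (P * Matrix.diagonal (fun i : Fin n => lam i.rev) * Pᵀ).IsHermitian := by
    rw [Matrix.IsHermitian, Matrix.conjTranspose_eq_transpose_of_trivial, hT]
  refine ⟨⟨hH, ?_⟩, ?_⟩
  · rw [eigs_conj_s6 P hP lam hfeas.2 hH]
    exact hfeas.1
  · rintro X ⟨hX, hXA⟩
    have hXT : Xᵀ = X := by
      rw [← Matrix.conjTranspose_eq_transpose_of_trivial]; exact hX
    have hsm : Monotone (hX.eigenvalues ∘ Tuple.sort hX.eigenvalues) := Tuple.monotone_sort _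
    have he : ∀ i, eigs X i = (hX.eigenvalues ∘ Tuple.sort hX.eigenvalues) i.rev := by
      intro i; rw [eigs, dif_pos hX]
    have hmem : eigs X ∈ LambdaSet A b := by
      refine ⟨hXA, fun i j hij => ?_⟩
      rw [he, he]
      exact hsm (Fin.rev_le_rev.2 hij)
    rw [trace_symm C _ hT, trace_symm C X hXT, hdecomp, trace_quad, hP]
    have hL : ∑ i, ∑ j, ω i * lam j.rev * (1 : Matrix (Fin n) (Fin n) ℝ) i j ^ 2
        = ∑ i, ω i * lam i.rev := by
      simp [Matrix.one_apply]
    rw [hL]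
    refine (hopt _ hmem).trans ?_
    obtain ⟨U, hU1, hU2, hXU⟩ : ∃ U : Matrix (Fin n) (Fin n) ℝ, Uᵀ * U = 1 ∧ U * Uᵀ = 1 ∧
        X = U * Matrix.diagonal hX.eigenvalues * Uᵀ := by
      refine ⟨hX.eigenvectorUnitary, ?_, ?_, ?_⟩
      · have := Unitary.coe_star_mul_self hX.eigenvectorUnitary
        simpa [Matrix.star_eq_conjTranspose] using this
      · have := Unitary.coe_mul_star_self hX.eigenvectorUnitary
        simpa [Matrix.star_eq_conjTranspose] using this
      · have := hX.spectral_theorem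
        rw [Unitary.conjStarAlgAut_apply] at this
        simpa [Matrix.star_eq_conjTranspose] using this
    have hq := trace_quad P U ω hX.eigenvalues
    rw [← hXU] at hq
    rw [hq]
    simp only [he, Fin.rev_rev]
    refine dstoch (Pᵀ * U) ?_ ?_ ω _ _ (Tuple.sort hX.eigenvalues)⁻¹ ?_ hω hsm
    · rw [Matrix.transpose_mul, Matrix.transpose_transpose, Matrix.mul_assoc, ← Matrix.mul_assoc P,
        hP', Matrix.one_mul, hU1]
    · rw [Matrix.transpose_mul, Matrix.transpose_transpose, Matrix.mul_assoc, ← Matrix.mul_assoc U,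
        hU2, Matrix.one_mul, hP]
    · funext i; simp
end

section
/- Let C ∈ S^{n×n} have eigenvalues ω₁ ≥ ω₂ ≥ … ≥ ωₙ (in descending order). Then inf{ ⟨C, X⟩ : X ∈ S_λ(A,b) } = inf{ Σ_{i=1}^{n} ωᵢ λ_{n+1−i} : λ ∈ Λ(A,b) }, where Λ(A,b) := {λ ∈ ℝⁿ : Aλ ≤ b, λ₁ ≥ … ≥ λₙ} and ⟨C, X⟩ := Tr(Cᵀ X). -/
open Matrix

open Matrix

theorem aux_mono_eq {n : ℕ} {f g : Fin n → ℝ} (hf : Monotone f) (hg : Monotone g)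
    (h : Multiset.map f Finset.univ.val = Multiset.map g Finset.univ.val) : f = g := by
  rw [Fin.univ_val_map, Fin.univ_val_map, Multiset.coe_eq_coe] at h
  exact List.ofFn_injective (h.eq_of_pairwise' hf.sortedLE_ofFn.pairwise hg.sortedLE_ofFn.pairwise)

theorem aux_eigs_sort {n : ℕ} {X : Matrix (Fin n) (Fin n) ℝ} (hX : X.IsHermitian) :
    ∀ i, eigs X (Fin.rev i) = hX.eigenvalues (Tuple.sort hX.eigenvalues i) := by
  intro i
  unfold eigs
  rw [dif_pos hX]
  simp only [Function.comp_apply, Fin.rev_rev]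

theorem aux_eigs_antitone {n : ℕ} {X : Matrix (Fin n) (Fin n) ℝ} (hX : X.IsHermitian) :
    Antitone (eigs X) := by
  intro i j hij
  have := Tuple.monotone_sort hX.eigenvalues (Fin.rev_le_rev.2 hij)
  unfold eigs
  rw [dif_pos hX]
  exact this

theorem aux_eigs_conj {n : ℕ} (P : Matrix (Fin n) (Fin n) ℝ) (l : Fin n → ℝ)
    (hP : Pᵀ * P = 1) (hl : Antitone l)
    (hX : (P * Matrix.diagonal (fun i => l (Fin.rev i)) * Pᵀ).IsHermitian) :
    eigs (P * Matrix.diagonal (fun i => l (Fin.rev i)) * Pᵀ) = l := by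
  have h1 := hX.roots_charpoly_eq_eigenvalues
  rw [Matrix.charpoly_mul_comm, ← mul_assoc, hP, one_mul, Matrix.charpoly_diagonal,
    Polynomial.roots_prod _ _ (by simp [Finset.prod_ne_zero_iff, Polynomial.X_sub_C_ne_zero])] at h1
  simp only [Polynomial.roots_X_sub_C, Multiset.bind_singleton] at h1
  have h2 : (hX.eigenvalues ∘ Tuple.sort hX.eigenvalues) = fun i => l (Fin.rev i) := by
    refine aux_mono_eq (Tuple.monotone_sort _) (fun i j h => hl (Fin.rev_le_rev.2 h)) ?_
    rw [h1, ← Multiset.map_map]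
    have : Multiset.map (Tuple.sort hX.eigenvalues) Finset.univ.val = Finset.univ.val := by
      simp
    rw [this]
    rfl
  funext i
  have := congrFun h2 (Fin.rev i)
  simp only [eigs, hX, dif_pos, this, Fin.rev_rev]

theorem aux_trace_diag {n : ℕ} (P : Matrix (Fin n) (Fin n) ℝ) (ω μ : Fin n → ℝ)
    (hP : Pᵀ * P = 1) :
    ((P * Matrix.diagonal ω * Pᵀ)ᵀ * (P * Matrix.diagonal μ * Pᵀ)).trace = ∑ i, ω i * μ i := by
  have : (P * Matrix.diagonal ω * Pᵀ)ᵀ * (P * Matrix.diagonal μ * Pᵀ)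
      = P * (Matrix.diagonal ω * (Pᵀ * P) * Matrix.diagonal μ * Pᵀ) := by
    simp [Matrix.transpose_mul, Matrix.mul_assoc]
  rw [this, Matrix.trace_mul_comm, Matrix.mul_assoc, hP]
  simp [Matrix.diagonal_mul_diagonal, Matrix.trace]

theorem aux_trace_gen {n : ℕ} (P U : Matrix (Fin n) (Fin n) ℝ) (ω μ : Fin n → ℝ) :
    ((P * Matrix.diagonal ω * Pᵀ)ᵀ * (U * Matrix.diagonal μ * Uᵀ)).trace
      = ∑ i, ∑ j, ω i * μ j * ((Pᵀ * U) i j) ^ 2 := by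
  have : (P * Matrix.diagonal ω * Pᵀ)ᵀ * (U * Matrix.diagonal μ * Uᵀ)
      = P * (Matrix.diagonal ω * (Pᵀ * U) * Matrix.diagonal μ * Uᵀ) := by
    simp [Matrix.transpose_mul, Matrix.mul_assoc]
  rw [this, Matrix.trace_mul_comm, Matrix.mul_assoc]
  have h2 : Uᵀ * P = (Pᵀ * U)ᵀ := by simp
  rw [h2]
  generalize Pᵀ * U = Q
  refine Finset.sum_congr rfl fun i _ => ?_
  rw [Matrix.diag_apply, Matrix.mul_apply]
  refine Finset.sum_congr rfl fun j _ => ?_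
  rw [Matrix.mul_diagonal, Matrix.diagonal_mul, Matrix.transpose_apply]
  ring

theorem aux_ds {n : ℕ} (Q : Matrix (Fin n) (Fin n) ℝ) (h1 : Qᵀ * Q = 1) (h2 : Q * Qᵀ = 1) :
    (Matrix.of fun i j => Q i j ^ 2) ∈ doublyStochastic ℝ (Fin n) := by
  rw [mem_doublyStochastic_iff_sum]
  refine ⟨fun i j => by simp only [Matrix.of_apply]; positivity, fun i => ?_, fun j => ?_⟩
  · have := congrFun (congrFun h2 i) i
    simpa [Matrix.mul_apply, sq] using this
  · have := congrFun (congrFun h1 j) j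
    simpa [Matrix.mul_apply, sq] using this

theorem aux_ds_bound {n : ℕ} (M : Matrix (Fin n) (Fin n) ℝ) (hM : M ∈ doublyStochastic ℝ (Fin n))
    (ω μ : Fin n → ℝ) (c : ℝ) (hc : ∀ σ : Equiv.Perm (Fin n), c ≤ ∑ i, ω i * μ (σ i)) :
    c ≤ ∑ i, ∑ j, ω i * μ j * M i j := by
  obtain ⟨w, hw, hw1, rfl⟩ := exists_eq_sum_perm_of_mem_doublyStochastic hM
  have key : ∑ i, ∑ j, ω i * μ j * (∑ σ, w σ • Equiv.Perm.permMatrix ℝ σ) i j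
      = ∑ σ : Equiv.Perm (Fin n), w σ * ∑ i, ω i * μ (σ i) := by
    simp only [Matrix.sum_apply, Matrix.smul_apply, Finset.mul_sum]
    simp only [Finset.sum_comm (s := (Finset.univ : Finset (Fin n)))
      (t := (Finset.univ : Finset (Equiv.Perm (Fin n))))]
    refine Finset.sum_congr rfl fun σ _ => Finset.sum_congr rfl fun i _ => ?_
    rw [Finset.sum_eq_single (σ i)]
    · simp [Equiv.Perm.permMatrix, PEquiv.toMatrix_apply]; ring
    · intro j _ hj
      simp [Equiv.Perm.permMatrix, PEquiv.toMatrix_apply, hj.symm]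
    · simp
  rw [key]
  calc c = ∑ σ : Equiv.Perm (Fin n), w σ * c := by rw [← Finset.sum_mul, hw1, one_mul]
    _ ≤ _ := Finset.sum_le_sum fun σ _ => mul_le_mul_of_nonneg_left (hc σ) (hw σ)

theorem aux_lower {n : ℕ} (P X : Matrix (Fin n) (Fin n) ℝ) (ω : Fin n → ℝ)
    (hP : Pᵀ * P = 1) (hP' : P * Pᵀ = 1) (hω : Antitone ω) (hX : X.IsHermitian) :
    ∑ i, ω i * eigs X (Fin.rev i) ≤ ((P * Matrix.diagonal ω * Pᵀ)ᵀ * X).trace := by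
  obtain ⟨U, hU, hU', hXU⟩ : ∃ U : Matrix (Fin n) (Fin n) ℝ, Uᵀ * U = 1 ∧ U * Uᵀ = 1 ∧
      X = U * Matrix.diagonal hX.eigenvalues * Uᵀ := by
    refine ⟨hX.eigenvectorUnitary, ?_, ?_, ?_⟩
    · exact Unitary.coe_star_mul_self hX.eigenvectorUnitary
    · exact Unitary.coe_mul_star_self hX.eigenvectorUnitary
    · have := hX.spectral_theorem
      rw [Unitary.conjStarAlgAut_apply] at this
      exact this
  have e := aux_trace_gen P U ω hX.eigenvalues
  rw [← hXU] at e
  rw [e]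
  refine aux_ds_bound _ (aux_ds (Pᵀ * U) ?_ ?_) ω _ _ ?_
  · rw [Matrix.transpose_mul, Matrix.transpose_transpose, Matrix.mul_assoc, ← Matrix.mul_assoc P,
      hP', Matrix.one_mul, hU]
  · rw [Matrix.transpose_mul, Matrix.transpose_transpose, Matrix.mul_assoc, ← Matrix.mul_assoc U,
      hU', Matrix.one_mul, hP]
  · intro σ
    have hav : Antivary ω (hX.eigenvalues ∘ Tuple.sort hX.eigenvalues) :=
      hω.antivary (Tuple.monotone_sort _)
    have := hav.sum_mul_le_sum_mul_comp_perm (σ := σ.trans (Tuple.sort hX.eigenvalues).symm)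
    simpa [aux_eigs_sort hX] using this

/-- For a symmetric matrix `C` with descending eigenvalues `ω` (i.e. `C = P Diag(ω) Pᵀ`
with `P` orthogonal and `ω` descending),
`inf{⟨C,X⟩ : X ∈ S_λ(A,b)} = inf{Σᵢ ωᵢ λ_{n+1−i} : λ ∈ Λ(A,b)}`. -/
theorem statement7 {m n : ℕ} (A : Matrix (Fin m) (Fin n) ℝ) (b : Fin m → ℝ)
    (C P : Matrix (Fin n) (Fin n) ℝ) (ω : Fin n → ℝ)
    (hP : Pᵀ * P = 1) (hP' : P * Pᵀ = 1)
    (hω : Antitone ω)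
    (hC : C = P * Matrix.diagonal ω * Pᵀ) :
    sInf {r | ∃ X ∈ SLambda A b, r = (Cᵀ * X).trace} =
    sInf {r | ∃ l ∈ LambdaSet A b, r = ∑ i : Fin n, ω i * l i.rev} := by
  have key : ∀ X ∈ SLambda A b, ∃ l ∈ LambdaSet A b,
      ∑ i : Fin n, ω i * l i.rev ≤ (Cᵀ * X).trace := by
    rintro X ⟨hX, hA⟩
    refine ⟨eigs X, ⟨hA, aux_eigs_antitone hX⟩, ?_⟩
    rw [hC]
    exact aux_lower P X ω hP hP' hω hX
  have hsub : {r | ∃ l ∈ LambdaSet A b, r = ∑ i : Fin n, ω i * l i.rev} ⊆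
      {r | ∃ X ∈ SLambda A b, r = (Cᵀ * X).trace} := by
    rintro r ⟨l, ⟨hl, hl'⟩, rfl⟩
    have hX : (P * Matrix.diagonal (fun i => l (Fin.rev i)) * Pᵀ).IsHermitian := by
      simp [Matrix.IsHermitian, Matrix.conjTranspose_eq_transpose_of_trivial,
        Matrix.transpose_mul, Matrix.mul_assoc]
    refine ⟨P * Matrix.diagonal (fun i => l (Fin.rev i)) * Pᵀ, ⟨hX, ?_⟩, ?_⟩
    · rw [aux_eigs_conj P l hP hl' hX]
      exact hl
    · rw [hC, aux_trace_diag P _ _ hP]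
  generalize hT : {r | ∃ l ∈ LambdaSet A b, r = ∑ i : Fin n, ω i * l i.rev} = T at *
  generalize hS : {r | ∃ X ∈ SLambda A b, r = (Cᵀ * X).trace} = S at *
  have key' : ∀ s ∈ S, ∃ t ∈ T, t ≤ s := by
    subst hT hS
    rintro s ⟨X, hX, rfl⟩
    obtain ⟨l, hl, h⟩ := key X hX
    exact ⟨_, ⟨l, hl, rfl⟩, h⟩
  rcases T.eq_empty_or_nonempty with hTe | hTn
  · have : S = ∅ := by
      rw [Set.eq_empty_iff_forall_notMem]
      intro s hs
      obtain ⟨t, ht, _⟩ := key' s hs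
      simp [hTe] at ht
    rw [this, hTe]
  by_cases hb : BddBelow T
  · have hbS : BddBelow S := by
      obtain ⟨c, hc⟩ := hb
      refine ⟨c, fun s hs => ?_⟩
      obtain ⟨t, ht, h⟩ := key' s hs
      exact (hc ht).trans h
    refine le_antisymm (csInf_le_csInf hbS hTn hsub) (le_csInf (hTn.mono hsub) fun s hs => ?_)
    obtain ⟨t, ht, h⟩ := key' s hs
    exact (csInf_le hb ht).trans h
  · rw [Real.sInf_of_not_bddBelow hb, Real.sInf_of_not_bddBelow fun h => hb (h.mono hsub)]
end

section
/- Let Y ∈ ℝ^{n×n} with (1/2)(Y + Yᵀ) = P Ω Pᵀ, P orthogonal, Ω = Diag(ω₁,…,ωₙ), ω₁ ≤ … ≤ ωₙ, and set ω̄ := (ωₙ,…,ω₁) ∈ ℝⁿ. Assume Λ(A,b) := {λ ∈ ℝⁿ : Aλ ≤ b, λ₁ ≥ … ≥ λₙ} is nonempty, and let Proj_Λ(ω̄) denote the (unique) Euclidean projection of ω̄ onto the closed convex set Λ(A,b). Then inf{ (1/2)‖X − Y‖_F² : X ∈ S_λ(A,b) } = (1/2)( ‖Proj_Λ(ω̄)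 − ω̄‖₂² + ‖Y‖_F² − ‖ω̄‖₂² ). -/
open Matrix

/-- The squared Frobenius norm of a real square matrix. -/
def frobSq {n : ℕ} (M : Matrix (Fin n) (Fin n) ℝ) : ℝ :=
  ∑ i, ∑ j, (M i j) ^ 2

lemma frobSq_eq_trace {n : ℕ} (M : Matrix (Fin n) (Fin n) ℝ) : frobSq M = (M * Mᵀ).trace := by
  simp [frobSq, Matrix.trace, Matrix.mul_apply, sq]

lemma ds_le {n : ℕ} (M : Matrix (Fin n) (Fin n) ℝ) (hM : M ∈ doublyStochastic ℝ (Fin n))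
    (f g : Fin n → ℝ) (hfg : Monovary f g) :
    ∑ i, ∑ j, M i j * (f i * g j) ≤ ∑ i, f i * g i := by
  obtain ⟨w, hw0, hw1, hw⟩ := exists_eq_sum_perm_of_mem_doublyStochastic hM
  rw [← hw]
  have h1 : ∑ i, ∑ j, (∑ σ, w σ • Equiv.Perm.permMatrix ℝ σ : Matrix (Fin n) (Fin n) ℝ) i j * (f i * g j)
      = ∑ σ, w σ * ∑ i, f i * g (σ i) := by
    simp only [Matrix.sum_apply, Matrix.smul_apply, Finset.sum_mul, smul_eq_mul]
    simp_rw [Finset.mul_sum]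
    rw [Finset.sum_comm' (t' := Finset.univ) (s' := fun _ => Finset.univ) (by simp)]
    conv_lhs => enter [2, j]; rw [Finset.sum_comm]
    rw [Finset.sum_comm]
    refine Finset.sum_congr rfl fun σ _ => ?_
    rw [Finset.sum_comm]
    refine Finset.sum_congr rfl fun i _ => ?_
    rw [Finset.sum_eq_single (σ i)]
    · simp [Equiv.Perm.permMatrix, PEquiv.toMatrix_apply]
    · intro j _ hj
      simp [Equiv.Perm.permMatrix, PEquiv.toMatrix_apply, hj.symm]
    · simp
  rw [h1]
  calc _ ≤ ∑ σ, w σ * ∑ i, f i * g i := by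
        refine Finset.sum_le_sum fun σ _ => mul_le_mul_of_nonneg_left ?_ (hw0 σ)
        exact hfg.sum_mul_comp_perm_le_sum_mul
    _ = _ := by rw [← Finset.sum_mul, hw1, one_mul]

lemma orth_ds {n : ℕ} (Q : Matrix (Fin n) (Fin n) ℝ) (h1 : Q * Qᵀ = 1) (h2 : Qᵀ * Q = 1) :
    (Matrix.of fun i j => Q i j ^ 2) ∈ doublyStochastic ℝ (Fin n) := by
  rw [mem_doublyStochastic_iff_sum]
  refine ⟨fun i j => by simpa using sq_nonneg _, fun i => ?_, fun j => ?_⟩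
  · have := congrFun (congrFun h1 i) i
    simpa [Matrix.mul_apply, sq] using this
  · have := congrFun (congrFun h2 j) j
    simpa [Matrix.mul_apply, sq] using this

lemma trace_le {n : ℕ} (U P : Matrix (Fin n) (Fin n) ℝ) (e ω : Fin n → ℝ)
    (hU : Uᵀ * U = 1) (hU' : U * Uᵀ = 1) (hP : Pᵀ * P = 1) (hP' : P * Pᵀ = 1)
    (he : Monotone e) (hω : Monotone ω) :
    ((U * diagonal e * Uᵀ) * (P * diagonal ω * Pᵀ)).trace ≤ ∑ i, e i * ω i := by
  have h := ds_le _ (orth_ds (Uᵀ * P)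
    (by rw [transpose_mul, transpose_transpose, Matrix.mul_assoc, ← Matrix.mul_assoc P, hP',
          Matrix.one_mul, hU])
    (by rw [transpose_mul, transpose_transpose, Matrix.mul_assoc, ← Matrix.mul_assoc U, hU',
          Matrix.one_mul, hP])) e ω (he.monovary hω)
  refine le_of_eq_of_le ?_ h
  have : ((U * diagonal e * Uᵀ) * (P * diagonal ω * Pᵀ)).trace =
      (diagonal e * (Uᵀ * P) * (diagonal ω * (Uᵀ * P)ᵀ)).trace := by
    rw [transpose_mul, transpose_transpose]
    simp only [Matrix.mul_assoc]
    rw [Matrix.trace_mul_comm U]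
    simp only [Matrix.mul_assoc]
  rw [this]
  generalize Uᵀ * P = Q
  rw [Matrix.trace]
  refine Finset.sum_congr rfl fun i _ => ?_
  rw [Matrix.diag_apply, Matrix.mul_apply]
  refine Finset.sum_congr rfl fun j _ => ?_
  rw [Matrix.diagonal_mul, Matrix.diagonal_mul]
  simp only [transpose_apply, of_apply]
  ring

lemma frobSq_conj {n : ℕ} (U : Matrix (Fin n) (Fin n) ℝ) (e : Fin n → ℝ) (hU : Uᵀ * U = 1) :
    frobSq (U * diagonal e * Uᵀ) = ∑ i, e i ^ 2 := by
  rw [frobSq_eq_trace]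
  have : (U * diagonal e * Uᵀ) * (U * diagonal e * Uᵀ)ᵀ = U * (diagonal e * diagonal e * Uᵀ) := by
    simp only [transpose_mul, transpose_transpose, diagonal_transpose, Matrix.mul_assoc]
    rw [← Matrix.mul_assoc Uᵀ U, hU, Matrix.one_mul]
  rw [this, Matrix.trace_mul_comm, Matrix.mul_assoc, hU, Matrix.mul_one, diagonal_mul_diagonal,
    trace_diagonal]
  simp [sq]

lemma frobSq_sub {n : ℕ} (X Y : Matrix (Fin n) (Fin n) ℝ) (hX : Xᵀ = X) :
    frobSq (X - Y) = frobSq X - 2 * (X * ((1 / 2 : ℝ) • (Y + Yᵀ))).trace + frobSq Y := by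
  have h : (X * Y).trace = (X * Yᵀ).trace := by
    rw [← Matrix.trace_transpose (X * Y), transpose_mul, hX, Matrix.trace_mul_comm]
  have h2 : (Y * X).trace = (X * Yᵀ).trace := by rw [Matrix.trace_mul_comm, h]
  simp only [frobSq_eq_trace, transpose_sub, Matrix.sub_mul, Matrix.mul_sub, trace_sub, hX,
    Matrix.mul_smul, Matrix.mul_add, trace_smul, trace_add, smul_eq_mul, h, h2]
  ring

lemma eigs_rev {n : ℕ} (X : Matrix (Fin n) (Fin n) ℝ) (hX : X.IsHermitian) (i : Fin n) :
    eigs X i = (hX.eigenvalues ∘ Tuple.sort hX.eigenvalues) i.rev := by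
  rw [eigs, dif_pos hX]

lemma eigs_decomp {n : ℕ} (X : Matrix (Fin n) (Fin n) ℝ) (hX : X.IsHermitian) :
    ∃ (U : Matrix (Fin n) (Fin n) ℝ) (e : Fin n → ℝ), Uᵀ * U = 1 ∧ U * Uᵀ = 1 ∧ Monotone e ∧
      X = U * diagonal e * Uᵀ ∧ ∀ i, eigs X i = e i.rev := by
  set σ := Tuple.sort hX.eigenvalues with hσ
  set V : Matrix (Fin n) (Fin n) ℝ := (hX.eigenvectorUnitary).1 with hV
  have hV1 : Vᵀ * V = 1 := by
    have := Unitary.coe_star_mul_self hX.eigenvectorUnitary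
    simpa [star_eq_conjTranspose] using this
  have hV2 : V * Vᵀ = 1 := by
    have := Unitary.coe_mul_star_self hX.eigenvectorUnitary
    simpa [star_eq_conjTranspose] using this
  have hsp : X = V * diagonal hX.eigenvalues * Vᵀ := by
    have := hX.spectral_theorem
    rw [Unitary.conjStarAlgAut_apply] at this
    simpa [star_eq_conjTranspose, Function.comp_def] using this
  refine ⟨V.submatrix id σ, hX.eigenvalues ∘ σ, ?_, ?_, Tuple.monotone_sort _, ?_,
    eigs_rev X hX⟩
  · rw [transpose_submatrix, ← Matrix.submatrix_mul _ _ _ _ _ Function.bijective_id, hV1]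
    simp
  · rw [transpose_submatrix, ← Matrix.submatrix_mul _ _ _ _ _ σ.bijective, hV2]
    simp
  · conv_lhs => rw [hsp]
    rw [← Matrix.submatrix_diagonal_equiv, transpose_submatrix,
      ← Matrix.submatrix_mul _ _ _ _ _ σ.bijective, ← Matrix.submatrix_mul _ _ _ _ _ σ.bijective]
    simp

lemma mono_unique {n : ℕ} (e f : Fin n → ℝ) (he : Monotone e) (hf : Monotone f)
    (h : Finset.univ.val.map e = Finset.univ.val.map f) : e = f := by
  apply List.ofFn_injective
  have hp : (List.ofFn e).Perm (List.ofFn f) := by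
    rw [← Multiset.coe_eq_coe]
    simpa [Fin.univ_val_map] using h
  exact hp.eq_of_pairwise' (List.sortedLE_ofFn_iff.2 he).pairwise (List.sortedLE_ofFn_iff.2 hf).pairwise

lemma charpoly_conj {n : ℕ} (U : Matrix (Fin n) (Fin n) ℝ) (e : Fin n → ℝ) (hU : Uᵀ * U = 1) :
    (U * diagonal e * Uᵀ).charpoly.roots = Finset.univ.val.map e := by
  rw [Matrix.charpoly_mul_comm, ← Matrix.mul_assoc, hU, Matrix.one_mul, Matrix.charpoly_diagonal]
  rw [← Polynomial.roots_multiset_prod_X_sub_C (Finset.univ.val.map e), Multiset.map_map]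
  rfl

lemma eigs_unique {n : ℕ} (U : Matrix (Fin n) (Fin n) ℝ) (e : Fin n → ℝ) (hU : Uᵀ * U = 1)
    (he : Monotone e) (i : Fin n) : eigs (U * diagonal e * Uᵀ) i = e i.rev := by
  have hX : (U * diagonal e * Uᵀ).IsHermitian := by
    simp [Matrix.IsHermitian, conjTranspose_eq_transpose_of_trivial, Matrix.mul_assoc]
  obtain ⟨V, f, hV, hV', hf, h, h'⟩ := eigs_decomp _ hX
  rw [h', mono_unique f e hf he]
  rw [← charpoly_conj V f hV, ← charpoly_conj U e hU, ← h]

lemma sum_expand {n : ℕ} (e ω : Fin n → ℝ) :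
    ∑ i : Fin n, (e i.rev - ω i.rev) ^ 2 = ∑ i, e i ^ 2 - 2 * ∑ i, e i * ω i + ∑ i, ω i ^ 2 := by
  have h := Equiv.sum_comp Fin.revPerm (fun i => (e i - ω i) ^ 2)
  simp only [Fin.revPerm_apply] at h
  rw [h, Finset.mul_sum,
    ← Finset.sum_sub_distrib, ← Finset.sum_add_distrib]
  exact Finset.sum_congr rfl fun i _ => by ring

/-- Value of the projection problem: if `(1/2)(Y + Yᵀ) = P Diag(ω) Pᵀ` with `P`
orthogonal and `ω` ascending, `ω̄ = (ωₙ,…,ω₁)`, `Λ(A,b)` is nonempty and `proj` is the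
Euclidean projection of `ω̄` onto `Λ(A,b)`, then
`inf{(1/2)‖X − Y‖_F² : X ∈ S_λ(A,b)} = (1/2)(‖proj − ω̄‖² + ‖Y‖_F² − ‖ω̄‖²)`. -/
theorem statement9 {m n : ℕ} (A : Matrix (Fin m) (Fin n) ℝ) (b : Fin m → ℝ)
    (Y P : Matrix (Fin n) (Fin n) ℝ) (ω : Fin n → ℝ)
    (hP : Pᵀ * P = 1) (hP' : P * Pᵀ = 1)
    (hω : Monotone ω)
    (hdecomp : (1 / 2 : ℝ) • (Y + Yᵀ) = P * Matrix.diagonal ω * Pᵀ)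
    (hne : (LambdaSet A b).Nonempty)
    (proj : Fin n → ℝ)
    (hprojmem : proj ∈ LambdaSet A b)
    (hproj : ∀ q ∈ LambdaSet A b,
      ∑ i : Fin n, (proj i - ω i.rev) ^ 2 ≤ ∑ i : Fin n, (q i - ω i.rev) ^ 2) :
    sInf {r | ∃ X ∈ SLambda A b, r = (1 / 2 : ℝ) * frobSq (X - Y)} =
    (1 / 2 : ℝ) * ((∑ i : Fin n, (proj i - ω i.rev) ^ 2) + frobSq Y -
      ∑ i : Fin n, (ω i) ^ 2) := by
  apply IsLeast.csInf_eq
  refine ⟨?_, ?_⟩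
  · have hmono : Monotone (fun i : Fin n => proj i.rev) := fun i j hij =>
      hprojmem.2 (Fin.rev_le_rev.2 hij)
    have heig : eigs (P * diagonal (fun i : Fin n => proj i.rev) * Pᵀ) = proj := by
      funext i
      rw [eigs_unique P _ hP hmono, Fin.rev_rev]
    have hsym : (P * diagonal (fun i : Fin n => proj i.rev) * Pᵀ)ᵀ =
        P * diagonal (fun i : Fin n => proj i.rev) * Pᵀ := by
      simp [Matrix.mul_assoc]
    refine ⟨P * diagonal (fun i : Fin n => proj i.rev) * Pᵀ, ⟨?_, ?_⟩, ?_⟩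
    · rw [Matrix.IsHermitian, conjTranspose_eq_transpose_of_trivial, hsym]
    · rw [heig]; exact hprojmem.1
    · rw [frobSq_sub _ _ hsym, hdecomp, frobSq_conj _ _ hP]
      have h1 := sum_expand (fun i : Fin n => proj i.rev) ω
      simp only [Fin.rev_rev] at h1
      have h2 : (P * diagonal (fun i : Fin n => proj i.rev) * Pᵀ * (P * diagonal ω * Pᵀ)).trace
          = ∑ i : Fin n, proj i.rev * ω i := by
        simp only [Matrix.mul_assoc]
        rw [← Matrix.mul_assoc Pᵀ P, hP, Matrix.one_mul, Matrix.trace_mul_comm]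
        simp only [Matrix.mul_assoc]
        rw [hP, Matrix.mul_one, diagonal_mul_diagonal, trace_diagonal]
      rw [h1, h2]
      ring
  · rintro r ⟨X, ⟨hX, hXA⟩, rfl⟩
    obtain ⟨U, e, hU, hU', he, h, h'⟩ := eigs_decomp X hX
    have hq := hproj (eigs X) ⟨hXA, fun i j hij => by
      rw [h', h']; exact he (Fin.rev_le_rev.2 hij)⟩
    simp only [h'] at hq
    rw [sum_expand] at hq
    have hXt : Xᵀ = X := by rw [← conjTranspose_eq_transpose_of_trivial]; exact hX
    have ht := trace_le U P e ω hU hU' hP hP' he hω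
    rw [frobSq_sub X Y hXt, hdecomp, h, frobSq_conj _ _ hU]
    linarith
end

section
/- Let V be a real inner product space and F : V → ℝ Fréchet differentiable with L-Lipschitz gradient (‖∇F(x) − ∇F(y)‖ ≤ L‖x − y‖ for all x, y). Let X, D ∈ V with ‖D − X‖² ≤ ρ, let Θ > 0 satisfy Θ ≥ ρL, set m := ⟨∇F(X), D − X⟩ and assume m ≤ 0, and let γ := min{|m|/Θ, 1}. Then: (i) if |m| ≤ Θ, F(X + γ(D − X)) ≤ F(X) − m²/(2Θ); (ii) if |m| > Θ, F(X + γ(D − X)) ≤ F(X) − (|m| − Θ/2). -/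
/-- One step of the Frank–Wolfe method: with `m = ⟨∇F(X), D − X⟩ ≤ 0`,
`‖D − X‖² ≤ ρ`, `Θ ≥ ρL` and `γ = min{|m|/Θ, 1}`, the objective decreases by
`m²/(2Θ)` when `|m| ≤ Θ` and by `|m| − Θ/2` when `|m| > Θ`. -/
theorem statement11 {V : Type*} [NormedAddCommGroup V] [InnerProductSpace ℝ V]
    (F : V → ℝ) (gradF : V → V) (L : ℝ)
    (hdiff : ∀ x, HasFDerivAt F (innerSL ℝ (gradF x)) x)
    (hLip : ∀ x y, ‖gradF x - gradF y‖ ≤ L * ‖x - y‖)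
    (X D : V) (ρ Θ : ℝ)
    (hρ : ‖D - X‖ ^ 2 ≤ ρ)
    (hΘpos : 0 < Θ) (hΘ : ρ * L ≤ Θ)
    (m γ : ℝ)
    (hm : m = (inner ℝ (gradF X) (D - X) : ℝ)) (hm0 : m ≤ 0)
    (hγ : γ = min (|m| / Θ) 1) :
    (|m| ≤ Θ → F (X + γ • (D - X)) ≤ F X - m ^ 2 / (2 * Θ)) ∧
    (Θ < |m| → F (X + γ • (D - X)) ≤ F X - (|m| - Θ / 2)) := by
  set d := D - X with hd
  have hLd : L * ‖d‖ ^ 2 ≤ Θ := by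
    by_cases h0 : ‖d‖ = 0
    · rw [h0]; simpa using hΘpos.le
    · have hpos : 0 < ‖d‖ := lt_of_le_of_ne (norm_nonneg _) (Ne.symm h0)
      have h1 := hLip D X
      rw [← hd] at h1
      have h2 : 0 ≤ L := by
        by_contra hneg
        have := norm_nonneg (gradF D - gradF X)
        have := mul_neg_of_neg_of_pos (not_le.mp hneg) hpos
        linarith
      nlinarith [mul_le_mul_of_nonneg_left hρ h2]
  have hder : ∀ t : ℝ, HasDerivAt (fun t : ℝ => F (X + t • d) - t * m - Θ / 2 * t ^ 2)
      (inner ℝ (gradF (X + t • d)) d - m - Θ * t) t := by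
    intro t
    have hl : HasDerivAt (fun t : ℝ => X + t • d) d t := by
      simpa using ((hasDerivAt_id t).smul_const d).const_add X
    have h1 := (hdiff (X + t • d)).comp_hasDerivAt t hl
    have h2 := (hasDerivAt_id t).mul_const m
    have h3 := ((hasDerivAt_id t).pow 2).const_mul (Θ / 2)
    have h4 := (h1.sub h2).sub h3
    refine h4.congr_deriv ?_
    simp
    ring
  have key : ∀ t : ℝ, 0 ≤ t → F (X + t • d) ≤ F X + t * m + Θ / 2 * t ^ 2 := by
    intro t ht
    have hanti : AntitoneOn (fun t : ℝ => F (X + t • d) - t * m - Θ / 2 * t ^ 2)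
        (Set.Ici 0) := by
      apply antitoneOn_of_deriv_nonpos (convex_Ici 0)
      · exact fun s _ => (hder s).continuousAt.continuousWithinAt
      · exact fun s _ => (hder s).differentiableAt.differentiableWithinAt
      · intro s hs
        rw [interior_Ici] at hs
        have hs0 : (0 : ℝ) < s := hs
        rw [(hder s).deriv, hm, ← inner_sub_left]
        have h1 := real_inner_le_norm (gradF (X + s • d) - gradF X) d
        have h2 := hLip (X + s • d) X
        rw [add_sub_cancel_left, norm_smul, Real.norm_of_nonneg hs0.le] at h2
        have h3 := mul_le_mul_of_nonneg_right h2 (norm_nonneg d)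
        have h4 := mul_le_mul_of_nonneg_left hLd hs0.le
        nlinarith
    have := hanti (Set.mem_Ici.mpr le_rfl) (Set.mem_Ici.mpr ht) ht
    simp at this
    linarith
  rw [abs_of_nonpos hm0] at hγ ⊢
  constructor
  · intro h
    have hg : γ = -m / Θ := by
      rw [hγ]; exact min_eq_left ((div_le_one hΘpos).mpr h)
    have hk := key γ (by rw [hg]; exact div_nonneg (by linarith) hΘpos.le)
    have he : γ * m + Θ / 2 * γ ^ 2 = - (m ^ 2 / (2 * Θ)) := by
      rw [hg]; field_simp; ring
    linarith
  · intro h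
    have hg : γ = 1 := by
      rw [hγ]; exact min_eq_right ((one_le_div hΘpos).mpr h.le)
    have hk := key γ (by rw [hg]; exact zero_le_one)
    rw [hg] at hk ⊢
    linarith
end

section
/- Let Θ > 0, F* ∈ ℝ, and let (F_k)_{k≥0} and (m_k)_{k≥0} be real sequences with F_k ≥ F* for all k, and such that for every k: F_{k+1} ≤ F_k − m_k²/(2Θ) whenever |m_k| ≤ Θ, and F_{k+1} ≤ F_k − (|m_k| − Θ/2) whenever |m_k| > Θ. Then for every K ≥ 0, min_{0 ≤ k ≤ K} |m_k| ≤ max{2(F₀ − F*), Θ} / √(K+1). -/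
/-- Sublinear rate for the Frank–Wolfe gap: if `F_k ≥ F*` for all `k` and the decrease
conditions `F_{k+1} ≤ F_k − m_k²/(2Θ)` (when `|m_k| ≤ Θ`) and
`F_{k+1} ≤ F_k − (|m_k| − Θ/2)` (when `|m_k| > Θ`) hold, then for every `K ≥ 0`,
`min_{0 ≤ k ≤ K} |m_k| ≤ max{2(F₀ − F*), Θ}/√(K+1)`. -/
theorem statement12 (Θ Fstar : ℝ) (hΘ : 0 < Θ)
    (F m : ℕ → ℝ)
    (hbdd : ∀ k, Fstar ≤ F k)
    (hdec₁ : ∀ k, |m k| ≤ Θ → F (k + 1) ≤ F k - (m k) ^ 2 / (2 * Θ))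
    (hdec₂ : ∀ k, Θ < |m k| → F (k + 1) ≤ F k - (|m k| - Θ / 2)) :
    ∀ K : ℕ, (Finset.range (K + 1)).inf' (by simp) (fun k => |m k|) ≤
      max (2 * (F 0 - Fstar)) Θ / Real.sqrt (K + 1) := by
  intro K
  set g := (Finset.range (K + 1)).inf' (by simp) (fun k => |m k|) with hg
  have hle : ∀ k, k < K + 1 → g ≤ |m k| := fun k hk =>
    Finset.inf'_le (fun k => |m k|) (Finset.mem_range.mpr hk)
  have hg0 : 0 ≤ g := by
    rw [hg]
    exact Finset.le_inf' _ _ (fun k _ => abs_nonneg (m k))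
  have key : ∀ d : ℝ, (∀ k, k < K + 1 → F (k + 1) ≤ F k - d) →
      ((K : ℝ) + 1) * d ≤ F 0 - Fstar := by
    intro d hd
    have h : ∀ n : ℕ, n ≤ K + 1 → F n ≤ F 0 - n * d := by
      intro n
      induction n with
      | zero => intro _; simp
      | succ n ih =>
        intro hn
        have h1 := ih (by omega)
        have h2 := hd n (by omega)
        push_cast
        linarith
    have h1 := h (K + 1) le_rfl
    have h2 := hbdd (K + 1)
    push_cast at h1
    linarith
  have hD : 0 ≤ F 0 - Fstar := sub_nonneg.mpr (hbdd 0)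
  set C := max (2 * (F 0 - Fstar)) Θ with hC
  have hC1 : 2 * (F 0 - Fstar) ≤ C := le_max_left _ _
  have hC2 : Θ ≤ C := le_max_right _ _
  have hC0 : 0 ≤ C := hΘ.le.trans hC2
  have hK : (0 : ℝ) ≤ K := Nat.cast_nonneg K
  have hn : (0 : ℝ) < (K : ℝ) + 1 := by linarith
  have main : g ^ 2 * ((K : ℝ) + 1) ≤ C ^ 2 := by
    rcases le_or_gt g Θ with hgT | hgT
    · have h := key (g ^ 2 / (2 * Θ)) (by
        intro k hk
        have h1 := hle k hk
        rcases le_or_gt (|m k|) Θ with hm | hm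
        · have h2 := hdec₁ k hm
          have h3 : g ^ 2 / (2 * Θ) ≤ (m k) ^ 2 / (2 * Θ) := by
            rw [← sq_abs (m k)]
            gcongr
          linarith
        · have h2 := hdec₂ k hm
          have h3 : g ^ 2 / (2 * Θ) ≤ Θ / 2 := by
            rw [div_le_iff₀ (by positivity)]
            nlinarith
          linarith)
      rw [mul_div_assoc', div_le_iff₀ (by positivity)] at h
      have h4 : (2 * (F 0 - Fstar)) * Θ ≤ C * C := by gcongr
      linarith
    · have h := key (g / 2) (by
        intro k hk
        have h1 := hle k hk
        have h2 := hdec₂ k (by linarith)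
        linarith)
      have h5 : ((K : ℝ) + 1) * g ≤ C := by linarith
      have h6 : (((K : ℝ) + 1) * g) ^ 2 ≤ C ^ 2 := by gcongr
      have h7 : 0 ≤ g ^ 2 * (((K : ℝ) + 1) * K) := by positivity
      nlinarith
  rw [le_div_iff₀ (Real.sqrt_pos.mpr hn)]
  refine (sq_le_sq₀ (by positivity) hC0).mp ?_
  rw [mul_pow, Real.sq_sqrt hn.le]
  exact main
end
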